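/- arXiv:2604.27424 — 2 statements merged into one kernel-verified Lean document; each statement's English description precedes it below -/
import Mathlib

section
/- For all integers k ≥ 1 and n ≥ 1, the minimum of mdi_k(T) over all trees T on n vertices equals f_k(n); that is, every tree on n vertices has at least f_k(n) maximal distance-k independent sets, and there exists a tree on n vertices with exactly f_k(n) maximal distance-k independent sets. -/
/-- `J` is a distance-`k` independent set in `G`: any two distinct vertices of `J`
are at graph distance at least `k + 1`. -/
def DkIndep {V : Type*} (G : SimpleGraph V) (k : ℕ) (J : Set V) : Prop :=
  ∀ ⦃u⦄, u ∈ J → ∀ ⦃v⦄, v ∈ J → u ≠ v → k + 1 ≤ G.dist u v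

/-- `J` is a maximal distance-`k` independent set (`k`-MDIS) of `G`. -/
def MaxDkIndep {V : Type*} (G : SimpleGraph V) (k : ℕ) (J : Set V) : Prop :=
  DkIndep G k J ∧ ∀ J', DkIndep G k J' → J ⊆ J' → J' = J

/-- `mdi G k` is the number of maximal distance-`k` independent sets of `G`. -/
noncomputable def mdi {V : Type*} (G : SimpleGraph V) (k : ℕ) : ℕ :=
  {J : Set V | MaxDkIndep G k J}.ncard

/-- `f_k(n)` from the paper. -/
def fk (k n : ℕ) : ℕ :=
  if n ≤ k + 1 then n else n - (n - k % 2) / (k / 2 + 1) + 1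

/-- closed ball `N_k[x]`. -/
def ball {V : Type*} (G : SimpleGraph V) (k : ℕ) (x : V) : Set V :=
  {v | G.dist x v ≤ k}

/-- a leaf is a vertex of degree 1. -/
def IsLeaf {V : Type*} (G : SimpleGraph V) (v : V) : Prop :=
  (G.neighborSet v).ncard = 1

/-- eccentricity of a vertex. -/
noncomputable def ecc {V : Type*} [Fintype V] (G : SimpleGraph V) (v : V) : ℕ :=
  Finset.univ.sup (G.dist v)

/-- diameter of a finite graph. -/
noncomputable def gdiam {V : Type*} [Fintype V] (G : SimpleGraph V) : ℕ :=
  Finset.univ.sup (ecc G)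

/-- a central vertex is one of minimum eccentricity. -/
def IsCentral {V : Type*} [Fintype V] (G : SimpleGraph V) (v : V) : Prop :=
  ∀ u, ecc G v ≤ ecc G u

/-- a `k`-twin: some other vertex has the same closed `k`-ball. -/
def KTwin {V : Type*} (G : SimpleGraph V) (k : ℕ) (u : V) : Prop :=
  ∃ v, v ≠ u ∧ ball G k u = ball G k v

/-- a diametral leaf: a leaf whose eccentricity equals the diameter. -/
def IsDiametralLeaf {V : Type*} [Fintype V] (G : SimpleGraph V) (u : V) : Prop :=
  IsLeaf G u ∧ ecc G u = gdiam G

/-- a `k`-special pair. -/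
def KSpecial {V : Type*} [Fintype V] (G : SimpleGraph V) (k : ℕ) (x y : V) : Prop :=
  IsDiametralLeaf G x ∧ IsDiametralLeaf G y ∧ KTwin G k x ∧ KTwin G k y ∧
    ball G k x ≠ ball G k y

/-- `mdi*_k(G, ℓ)`. -/
noncomputable def mdiStar {V : Type*} (G : SimpleGraph V) (k : ℕ) (ℓ : V) : ℕ :=
  {J : Set V | MaxDkIndep G k J ∧ ℓ ∈ J ∧ ∃ w ∉ J, ball G k w ∩ J = {ℓ}}.ncard

/-- The spider tree `S_{p,m}`: a center (`none`) together with `p` legs of `m` vertices. -/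
def spider (p m : ℕ) : SimpleGraph (Option (Fin p × Fin m)) :=
  SimpleGraph.fromRel fun a b =>
    match a, b with
    | none, some (_, j) => (j : ℕ) = 0
    | some (i, j), some (i', j') => i = i' ∧ (j : ℕ) + 1 = (j' : ℕ)
    | _, _ => False

/-- `S'_{p,m}`: the spider `S_{p,m}` with one leaf at distance `m` from the center removed. -/
def spider' (p m : ℕ) (hp : 0 < p) (hm : 0 < m) :=
  (spider p m).induce
    {v | v ≠ some (⟨0, hp⟩, ⟨m - 1, Nat.sub_lt hm Nat.one_pos⟩)}

/-- The double spider `B_{p₁,p₂,s}`: two adjacent centers (`Sum.inl false`, `Sum.inl true`),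
with `p₁` legs of `s` vertices on the first and `p₂` legs of `s` vertices on the second. -/
def btree (p₁ p₂ s : ℕ) : SimpleGraph (Bool ⊕ ((Fin p₁ ⊕ Fin p₂) × Fin s)) :=
  SimpleGraph.fromRel fun a b =>
    match a, b with
    | Sum.inl x, Sum.inl y => x ≠ y
    | Sum.inl false, Sum.inr (Sum.inl _, j) => (j : ℕ) = 0
    | Sum.inl true, Sum.inr (Sum.inr _, j) => (j : ℕ) = 0
    | Sum.inr (c, j), Sum.inr (c', j') => c = c' ∧ (j : ℕ) + 1 = (j' : ℕ)
    | _, _ => False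

/-- `G` contains a subgraph isomorphic to `H`. -/
def ContainsSub {V W : Type*} (G : SimpleGraph V) (H : SimpleGraph W) : Prop :=
  ∃ f : W → V, Function.Injective f ∧ ∀ a b, H.Adj a b → G.Adj (f a) (f b)

/-- A pendant path on `s` vertices `P 0, …, P (s-1)` attached to `w`:
`P 0` is a leaf, consecutive vertices are adjacent, interior vertices have degree 2,
and `P (s-1)` is adjacent to `w`. -/
def IsPendantPath {V : Type*} (T : SimpleGraph V) (s : ℕ) (P : ℕ → V) (w : V) : Prop :=
  Set.InjOn P (Set.Iio s) ∧ (∀ i < s, P i ≠ w) ∧ IsLeaf T (P 0) ∧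
    (∀ i, i + 1 < s → T.Adj (P i) (P (i + 1))) ∧
    (∀ i, 0 < i → i < s → (T.neighborSet (P i)).ncard = 2) ∧
    T.Adj (P (s - 1)) w

/-- Isomorphism of simple graphs on `Fin n` as a setoid. -/
def graphSetoid (n : ℕ) : Setoid (SimpleGraph (Fin n)) where
  r G H := Nonempty (G ≃g H)
  iseqv := ⟨fun _ => ⟨SimpleGraph.Iso.refl⟩, fun ⟨e⟩ => ⟨e.symm⟩, fun ⟨e⟩ ⟨f⟩ => ⟨e.trans f⟩⟩

/-- The number of isomorphism classes of graphs in a set of graphs on `Fin n`. -/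
noncomputable def numIsoClasses {n : ℕ} (S : Set (SimpleGraph (Fin n))) : ℕ :=
  ((fun G => Quotient.mk (graphSetoid n) G) '' S).ncard

/-!
A distance-`k` independent set is maximal exactly when every vertex is within distance `k` of it.
Hence restricting to fewer vertices never increases the number of maximal sets, and deleting `v`
decreases it as soon as the `k`-ball of `v` contains that of another vertex `w`: once `v` is
deleted, a maximal set containing `v` no longer covers `w`.

The lower bound is an induction over subtrees. If deleting some leaf decreases the count, use
`f_k(n + 1) ≤ f_k(n) + 1`. Otherwise let `p` be farthest from a vertex `r`, at distance more than
`k`, and let `a` be the vertex at distance `⌊k/2⌋` from `p` towards `r`. Everything behind `a` is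
the path from `p` to `a`, and there is a vertex `x` whose `k`-ball lies in the `k`-ball of each
vertex of that path other than `p`. So deleting the path loses at least `⌊k/2⌋` maximal sets, while
`f_k(n + ⌊k/2⌋ + 1) ≤ f_k(n) + ⌊k/2⌋`.

Equality holds for spiders whose legs have `⌊k/2⌋ + 1` vertices, except for a possibly shorter last
leg. Let `L` consist of those leaves that are pairwise more than `k` apart. The vertices outside `L`
are pairwise within distance `k`, so a maximal set other than `L` has exactly one vertex outside
`L`, and that vertex determines it.
-/

section DistanceIndependence

variable {V : Type*} {G : SimpleGraph V} {k : ℕ} {A B J : Set V}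

theorem dkIndep_singleton (G : SimpleGraph V) (k : ℕ) (v : V) : DkIndep G k {v} :=
  Set.pairwise_singleton v fun x y => k + 1 ≤ G.dist x y

theorem DkIndep.mono (hJ : DkIndep G k J) (hBJ : B ⊆ J) : DkIndep G k B :=
  Set.Pairwise.mono hBJ hJ

theorem DkIndep.insert {v : V} (hJ : DkIndep G k J) (hv : ∀ u ∈ J, k < G.dist v u) :
    DkIndep G k (insert v J) := by
  have symm : Std.Symm fun u v => k + 1 ≤ G.dist u v := ⟨fun u v huv => G.dist_comm ▸ huv⟩
  exact Set.Pairwise.insert_of_symm hJ fun u hu _ => hv u hu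

/-- `J` is maximal among the distance-`k` independent subsets of `A`. Distances are those of `G`,
not of the subgraph induced by `A`. -/
def MaxDkIndepOn (G : SimpleGraph V) (k : ℕ) (A J : Set V) : Prop :=
  Maximal (fun J => J ⊆ A ∧ DkIndep G k J) J

/-- The number of maximal distance-`k` independent subsets of `A`; passing from a tree to one of
its subtrees is done by shrinking `A`. -/
noncomputable def mdiOn (G : SimpleGraph V) (k : ℕ) (A : Set V) : ℕ :=
  {J | MaxDkIndepOn G k A J}.ncard

theorem maxDkIndepOn_iff_dominating :
    MaxDkIndepOn G k A J ↔ J ⊆ A ∧ DkIndep G k J ∧ ∀ v ∈ A, ∃ u ∈ J, G.dist v u ≤ k := by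
  constructor
  · intro hJ
    refine ⟨hJ.prop.1, hJ.prop.2, fun v hv => ?_⟩
    by_contra! hfar
    have hvJ : v ∈ J := hJ.le_of_ge ⟨Set.insert_subset hv hJ.prop.1, hJ.prop.2.insert hfar⟩
      (Set.subset_insert v J) (Set.mem_insert v J)
    simpa using hfar v hvJ
  · rintro ⟨hJA, hJ, hdom⟩
    refine ⟨⟨hJA, hJ⟩, fun K ⟨hKA, hK⟩ hJK v hv => ?_⟩
    obtain ⟨u, hu, huv⟩ := hdom v (hKA hv)
    by_contra hvJ
    have := hK hv (hJK hu) (by rintro rfl; exact hvJ hu)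
    omega

theorem maxDkIndepOn_univ : MaxDkIndepOn G k Set.univ J ↔ MaxDkIndep G k J := by
  simp only [MaxDkIndepOn, MaxDkIndep, maximal_iff, Set.subset_univ, true_and]
  exact and_congr_right fun _ => forall_congr' fun _ => by rw [eq_comm]

theorem mdiOn_univ (G : SimpleGraph V) (k : ℕ) : mdiOn G k Set.univ = mdi G k := by
  simp only [mdiOn, mdi, maxDkIndepOn_univ]

theorem mdiOn_eq_ncard (hne : A.Nonempty) (hA : ∀ u ∈ A, ∀ v ∈ A, G.dist u v ≤ k) :
    mdiOn G k A = A.ncard := by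
  suffices {J | MaxDkIndepOn G k A J} = (fun v => {v}) '' A by
    rw [mdiOn, this, Set.ncard_image_of_injective A Set.singleton_injective]
  ext J
  rw [Set.mem_ofPred_eq, maxDkIndepOn_iff_dominating]
  constructor
  · rintro ⟨hJA, hJ, hdom⟩
    obtain ⟨a, ha⟩ := hne
    obtain ⟨v, hv, -⟩ := hdom a ha
    refine ⟨v, hJA hv, (Set.eq_singleton_iff_unique_mem.2 ⟨hv, fun u hu => ?_⟩).symm⟩
    by_contra huv
    have := hJ hu hv huv
    have := hA u (hJA hu) v (hJA hv)
    omega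
  · rintro ⟨v, hv, rfl⟩
    exact ⟨Set.singleton_subset_iff.2 hv, dkIndep_singleton G k v,
      fun u hu => ⟨v, rfl, hA u hu v hv⟩⟩

theorem mdi_eq_card [Nonempty V] (h : ∀ u v, G.dist u v ≤ k) : mdi G k = Nat.card V := by
  rw [← mdiOn_univ, mdiOn_eq_ncard Set.univ_nonempty fun u _ v _ => h u v, Set.ncard_univ]

variable [Finite V]

theorem exists_maxDkIndepOn_superset (hJA : J ⊆ A) (hJ : DkIndep G k J) :
    ∃ K, J ⊆ K ∧ MaxDkIndepOn G k A K :=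
  Finite.exists_le_maximal ⟨hJA, hJ⟩

theorem MaxDkIndepOn.exists_inter_eq (hJ : MaxDkIndepOn G k B J) (hBA : B ⊆ A) :
    ∃ K, MaxDkIndepOn G k A K ∧ K ∩ B = J := by
  obtain ⟨K, hJK, hK⟩ := exists_maxDkIndepOn_superset (hJ.prop.1.trans hBA) hJ.prop.2
  exact ⟨K, hK, (hJ.eq_of_le ⟨Set.inter_subset_right, hK.prop.2.mono Set.inter_subset_left⟩
    (Set.subset_inter hJK hJ.prop.1)).symm⟩

theorem mdiOn_mono (hBA : B ⊆ A) : mdiOn G k B ≤ mdiOn G k A := by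
  have hsub : {J | MaxDkIndepOn G k B J} ⊆ (· ∩ B) '' {K | MaxDkIndepOn G k A K} :=
    fun J hJ => hJ.exists_inter_eq hBA
  exact (Set.ncard_le_ncard hsub).trans (Set.ncard_image_le (Set.toFinite _))

theorem mdiOn_lt_of_not_maxDkIndepOn_inter (hBA : B ⊆ A) (hJ : MaxDkIndepOn G k A J)
    (hJB : ¬ MaxDkIndepOn G k B (J ∩ B)) : mdiOn G k B < mdiOn G k A := by
  have hsub : {J | MaxDkIndepOn G k B J} ⊆ (· ∩ B) '' ({K | MaxDkIndepOn G k A K} \ {J}) := by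
    intro I hI
    obtain ⟨K, hK, rfl⟩ := MaxDkIndepOn.exists_inter_eq hI hBA
    exact ⟨K, ⟨hK, by rintro rfl; exact hJB hI⟩, rfl⟩
  calc mdiOn G k B ≤ ((· ∩ B) '' ({K | MaxDkIndepOn G k A K} \ {J})).ncard :=
        Set.ncard_le_ncard hsub
    _ ≤ ({K | MaxDkIndepOn G k A K} \ {J}).ncard := Set.ncard_image_le (Set.toFinite _)
    _ < mdiOn G k A := Set.ncard_sdiff_singleton_lt_of_mem hJ

theorem mdiOn_sdiff_singleton_lt {v w : V} (hv : v ∈ A) (hw : w ∈ A) (hwv : w ≠ v)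
    (hball : ball G k w ∩ A ⊆ ball G k v) : mdiOn G k (A \ {v}) < mdiOn G k A := by
  obtain ⟨J, hvJ, hJ⟩ := exists_maxDkIndepOn_superset (Set.singleton_subset_iff.2 hv)
    (dkIndep_singleton G k v)
  refine mdiOn_lt_of_not_maxDkIndepOn_inter Set.sdiff_subset hJ fun hJv => ?_
  obtain ⟨u, ⟨huJ, huA, huv⟩, hwu⟩ :=
    (maxDkIndepOn_iff_dominating.1 hJv).2.2 w ⟨hw, hwv⟩
  have hvu : G.dist v u ≤ k := hball ⟨hwu, huA⟩
  have := hJ.prop.2 (hvJ rfl) huJ (Ne.symm huv)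
  omega

theorem mdiOn_sdiff_add_ncard_le {S : Set V} {w : V} (hSA : S ⊆ A) (hw : w ∈ A \ S)
    (hball : ∀ v ∈ S, ball G k w ∩ A ⊆ ball G k v) :
    mdiOn G k (A \ S) + S.ncard ≤ mdiOn G k A := by
  induction S, S.toFinite using Set.Finite.induction_on with
  | empty => simp
  | @insert v S hvS _ ih =>
    have ih := ih ((Set.subset_insert v S).trans hSA) ⟨hw.1, fun h => hw.2 (Or.inr h)⟩
      fun u hu => hball u (Or.inr hu)
    have hlt : mdiOn G k ((A \ S) \ {v}) < mdiOn G k (A \ S) :=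
      mdiOn_sdiff_singleton_lt ⟨hSA (Or.inl rfl), hvS⟩ ⟨hw.1, fun h => hw.2 (Or.inr h)⟩
        (fun h => hw.2 (Or.inl h)) fun u hu => hball v (Or.inl rfl) ⟨hu.1, hu.2.1⟩
    rw [Set.sdiff_sdiff, Set.union_singleton] at hlt
    rw [Set.ncard_insert_of_notMem hvS]
    omega

theorem mdi_le_ncard_compl_add_one {L : Set V} (hL : DkIndep G k L)
    (hLc : ∀ u ∉ L, ∀ v ∉ L, G.dist u v ≤ k) : mdi G k ≤ Lᶜ.ncard + 1 := by
  let completion (v : V) : Set V := insert v {l ∈ L | k < G.dist v l}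
  have hsub : {J | MaxDkIndep G k J} ⊆ insert L (completion '' Lᶜ) := by
    intro J ⟨hJ, hmax⟩
    by_cases hJL : J ⊆ L
    · exact Or.inl (hmax L hL hJL).symm
    · obtain ⟨v, hvJ, hvL⟩ := Set.not_subset.1 hJL
      refine Or.inr ⟨v, hvL, hmax _ ((hL.mono (Set.sep_subset _ _)).insert fun u hu => hu.2) ?_⟩
      intro u huJ
      by_cases huv : u = v
      · exact Or.inl huv
      · have hvu : k < G.dist v u := hJ hvJ huJ (Ne.symm huv)
        exact Or.inr ⟨by_contra fun huL => (hLc v hvL u huL).not_gt hvu, hvu⟩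
  calc mdi G k ≤ (insert L (completion '' Lᶜ)).ncard := Set.ncard_le_ncard hsub
    _ ≤ (completion '' Lᶜ).ncard + 1 := Set.ncard_insert_le _ _
    _ ≤ Lᶜ.ncard + 1 := by gcongr; exact Set.ncard_image_le (Set.toFinite _)

end DistanceIndependence

section Geodesics

variable {V : Type*}

/-- The vertices lying on a shortest walk from `u` to `v`. In a tree this is the vertex set of the
path from `u` to `v`. -/
def geodesic (G : SimpleGraph V) (u v : V) : Set V :=
  {z | G.dist u z + G.dist z v = G.dist u v}

/-- The vertices `y` for which `a` lies between `r` and `y`: the descendants of `a` in a tree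
rooted at `r`, with `a` itself included. -/
def branch (G : SimpleGraph V) (r a : V) : Set V :=
  {y | a ∈ geodesic G r y}

/-- `A` contains all shortest walks between its members. The convex sets of a tree are the
vertex sets of its subtrees, together with `∅`. -/
def GeodConvex (G : SimpleGraph V) (A : Set V) : Prop :=
  ∀ u ∈ A, ∀ v ∈ A, geodesic G u v ⊆ A

variable {G T : SimpleGraph V}

theorem mem_geodesic {u v z : V} :
    z ∈ geodesic G u v ↔ G.dist u z + G.dist z v = G.dist u v := Iff.rfl

theorem mem_branch {r a y : V} :
    y ∈ branch G r a ↔ G.dist r a + G.dist a y = G.dist r y := Iff.rfl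

theorem left_mem_geodesic (u v : V) : u ∈ geodesic G u v := by
  simp [mem_geodesic]

theorem right_mem_geodesic (u v : V) : v ∈ geodesic G u v := by
  simp [mem_geodesic]

theorem geodesic_comm (u v : V) : geodesic G u v = geodesic G v u := by
  ext z
  simp only [mem_geodesic, G.dist_comm (u := u), G.dist_comm (v := v)]
  omega

theorem geodesic_subset_geodesic (hG : G.Connected) {u v w : V} (hw : w ∈ geodesic G u v) :
    geodesic G u w ⊆ geodesic G u v := by
  intro z hz
  have : G.dist z v ≤ G.dist z w + G.dist w v := hG.dist_triangle
  have : G.dist u v ≤ G.dist u z + G.dist z v := hG.dist_triangle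
  rw [mem_geodesic] at hw hz ⊢
  omega

theorem mem_geodesic_of_mem_geodesic (hG : G.Connected) {u v w z : V} (hw : w ∈ geodesic G u v)
    (hz : z ∈ geodesic G u w) : w ∈ geodesic G z v := by
  have : G.dist z v ≤ G.dist z w + G.dist w v := hG.dist_triangle
  have : G.dist u v ≤ G.dist u z + G.dist z v := hG.dist_triangle
  rw [mem_geodesic] at hw hz ⊢
  omega

theorem geodesic_subset_branch (hG : G.Connected) {r a p : V} (hp : p ∈ branch G r a) :
    geodesic G a p ⊆ branch G r a := by
  intro z hz
  have : G.dist r z ≤ G.dist r a + G.dist a z := hG.dist_triangle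
  have : G.dist r p ≤ G.dist r z + G.dist z p := hG.dist_triangle
  rw [mem_geodesic] at hz
  rw [mem_branch] at hp ⊢
  omega

theorem exists_adj_dist_of_dist_eq_add_one (hG : G.Connected) {u v : V} {m : ℕ}
    (huv : G.dist u v = m + 1) : ∃ w, G.Adj u w ∧ G.dist w v = m := by
  obtain ⟨p, hp⟩ := hG.exists_walk_length_eq_dist u v
  cases p with
  | nil => simp at huv
  | @cons _ w _ huw q =>
    refine ⟨w, huw, ?_⟩
    have := G.dist_le q
    have : G.dist u v ≤ G.dist u w + G.dist w v := hG.dist_triangle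
    rw [SimpleGraph.dist_eq_one_iff_adj.2 huw] at this
    rw [SimpleGraph.Walk.length_cons] at hp
    omega

theorem exists_mem_geodesic_dist_eq (hG : G.Connected) {u v : V} {i : ℕ} (hi : i ≤ G.dist u v) :
    ∃ z ∈ geodesic G u v, G.dist u z = i := by
  induction i with
  | zero => exact ⟨u, left_mem_geodesic u v, G.dist_self⟩
  | succ i ih =>
    obtain ⟨z, hz, hzi⟩ := ih (by omega)
    rw [mem_geodesic] at hz
    obtain ⟨w, hzw, hwv⟩ := exists_adj_dist_of_dist_eq_add_one hG
      (show G.dist z v = (G.dist u v - (i + 1)) + 1 by omega)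
    have huw : G.dist u w ≤ G.dist u z + G.dist z w := hG.dist_triangle
    have huv : G.dist u v ≤ G.dist u w + G.dist w v := hG.dist_triangle
    rw [SimpleGraph.dist_eq_one_iff_adj.2 hzw] at huw
    exact ⟨w, mem_geodesic.2 (by omega), by omega⟩

theorem eq_of_adj_of_dist_eq_add_one (hT : T.IsTree) {x v u u' : V} (huv : T.Adj u v)
    (hu'v : T.Adj u' v) (hu : T.dist x v = T.dist x u + 1) (hu' : T.dist x v = T.dist x u' + 1) :
    u = u' := by
  obtain ⟨p, -, hp⟩ := hT.connected.exists_path_of_dist x u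
  obtain ⟨q, -, hq⟩ := hT.connected.exists_path_of_dist x u'
  have hpv : (p.concat huv).IsPath :=
    SimpleGraph.Walk.isPath_of_length_eq_dist _ (by rw [SimpleGraph.Walk.length_concat]; omega)
  have hqv : (q.concat hu'v).IsPath :=
    SimpleGraph.Walk.isPath_of_length_eq_dist _ (by rw [SimpleGraph.Walk.length_concat]; omega)
  simpa using congrArg SimpleGraph.Walk.penultimate ((hT.existsUnique_path x v).unique hpv hqv)

theorem dist_eq_add_of_adj (hT : T.IsTree) {x z z' w : V} (hzz' : T.Adj z z')
    (hx : T.dist x z' = T.dist x z + 1) (hw : T.dist z w = T.dist z' w + 1) :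
    T.dist x w = T.dist x z + T.dist z w := by
  induction hm : T.dist z' w generalizing z z' with
  | zero =>
    obtain rfl := hT.connected.dist_eq_zero_iff.1 hm
    omega
  | succ m ih =>
    obtain ⟨y, hz'y, hyw⟩ := exists_adj_dist_of_dist_eq_add_one hT.connected hm
    have hyz : y ≠ z := by rintro rfl; omega
    have hxy : T.dist x y = T.dist x z' + 1 :=
      (hT.dist_eq_dist_add_one_of_adj x hz'y).resolve_left fun h =>
        hyz (eq_of_adj_of_dist_eq_add_one hT hz'y.symm hzz' h hx)
    have := ih hz'y hxy (by omega) hyw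
    omega

-- Move `z` one step towards `w`: either `x` or `y` gets one step farther, and then its geodesic
-- to `w` passes through `z`, or both get closer and the induction hypothesis applies.
theorem dist_four_point (hT : T.IsTree) (x y z w : V) :
    T.dist x y + T.dist z w ≤ max (T.dist x z + T.dist y w) (T.dist x w + T.dist y z) := by
  induction hm : T.dist z w generalizing z with
  | zero =>
    have : T.dist x y ≤ T.dist x z + T.dist z y := hT.connected.dist_triangle
    obtain rfl := hT.connected.dist_eq_zero_iff.1 hm
    rw [T.dist_comm (u := y)]
    omega
  | succ m ih =>
    obtain ⟨z', hzz', hz'w⟩ := exists_adj_dist_of_dist_eq_add_one hT.connected hm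
    have hz' := ih z' hz'w
    have hxy : T.dist x y ≤ T.dist x z + T.dist z y := hT.connected.dist_triangle
    rw [T.dist_comm (u := z)] at hxy
    rcases hT.dist_eq_dist_add_one_of_adj x hzz' with hx | hx
    · rcases hT.dist_eq_dist_add_one_of_adj y hzz' with hy | hy
      · omega
      · have := dist_eq_add_of_adj hT hzz' hy (by omega : T.dist z w = T.dist z' w + 1)
        omega
    · have := dist_eq_add_of_adj hT hzz' hx (by omega : T.dist z w = T.dist z' w + 1)
      omega

theorem injOn_dist_geodesic (hT : T.IsTree) (u v : V) : Set.InjOn (T.dist u) (geodesic T u v) := by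
  intro y hy z hz hyz
  rw [mem_geodesic] at hy hz
  have := dist_four_point hT u v y z
  rw [T.dist_comm (u := v), T.dist_comm (u := v)] at this
  exact hT.connected.dist_eq_zero_iff.1 (by omega)

theorem ncard_geodesic (hT : T.IsTree) (u v : V) : (geodesic T u v).ncard = T.dist u v + 1 := by
  have himage : T.dist u '' geodesic T u v = Set.Iic (T.dist u v) := by
    ext i
    constructor
    · rintro ⟨z, hz, rfl⟩
      exact Nat.le.intro hz
    · exact exists_mem_geodesic_dist_eq hT.connected
  rw [← (injOn_dist_geodesic hT u v).ncard_image, himage, ← Finset.coe_Iic, Set.ncard_coe_finset,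
    Nat.card_Iic]

theorem mem_geodesic_of_dist_lt (hT : T.IsTree) {p x z w : V} (hw : w ∈ geodesic T p z)
    (hx : T.dist p x < T.dist p w) : w ∈ geodesic T x z := by
  rw [mem_geodesic] at hw ⊢
  have h4 := dist_four_point hT p z x w
  have htri : T.dist x z ≤ T.dist x w + T.dist w z := hT.connected.dist_triangle
  rw [T.dist_comm (u := z), T.dist_comm (u := z)] at h4
  omega

theorem exists_mem_geodesic_dist_eq_dist_le (hT : T.IsTree) {p y z : V} {i : ℕ}
    (hy : T.dist p y < i) (hz : i ≤ T.dist p z) :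
    ∃ u ∈ geodesic T p z, T.dist p u = i ∧ T.dist y u ≤ T.dist y z := by
  obtain ⟨u, hu, hpu⟩ := exists_mem_geodesic_dist_eq hT.connected hz
  exact ⟨u, hu, hpu, Nat.le.intro (mem_geodesic_of_dist_lt hT hu (hpu ▸ hy))⟩

theorem mem_geodesic_of_mem_branch (hT : T.IsTree) {r a y z : V} (hy : y ∈ branch T r a)
    (hz : z ∉ branch T r a) : a ∈ geodesic T y z := by
  have hrz : T.dist r z < T.dist r a + T.dist a z := hT.connected.dist_triangle.lt_of_ne' hz
  have htri : T.dist y z ≤ T.dist y a + T.dist a z := hT.connected.dist_triangle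
  have h4 := dist_four_point hT r y a z
  rw [mem_branch] at hy
  rw [mem_geodesic]
  rw [T.dist_comm (u := y) (v := a)] at *
  omega

theorem ball_inter_subset_ball_of_mem_geodesic (hT : T.IsTree) {A : Set V} {k : ℕ} {a p r x y : V}
    (hpa : p ∈ branch T r a) (hbranch : A ∩ branch T r a = geodesic T p a)
    (hk : 2 * T.dist p a ≤ k) (hball : ball T k x ∩ A ⊆ ball T (k + 1) p)
    (hy : y ∈ geodesic T p a) (hyp : y ≠ p) : ball T k x ∩ A ⊆ ball T k y := by
  rintro z ⟨hxz, hzA⟩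
  have hpz : T.dist p z ≤ k + 1 := hball ⟨hxz, hzA⟩
  have hpy : 0 < T.dist p y := hT.connected.pos_dist_of_ne hyp.symm
  have hyz : T.dist y z ≤ T.dist y a + T.dist a z := hT.connected.dist_triangle
  rw [mem_geodesic] at hy
  by_cases hza : z ∈ branch T r a
  · have hz : T.dist p z + T.dist z a = T.dist p a := hbranch.subset ⟨hzA, hza⟩
    rw [T.dist_comm (u := z)] at hz
    exact hyz.trans (by omega)
  · have hz : T.dist p a + T.dist a z = T.dist p z := mem_geodesic_of_mem_branch hT hpa hza
    exact hyz.trans (by omega)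

theorem geodConvex_univ (G : SimpleGraph V) : GeodConvex G Set.univ :=
  fun _ _ _ _ => Set.subset_univ _

theorem GeodConvex.sdiff_branch (hT : T.IsTree) {A : Set V} (hA : GeodConvex T A) (r a : V) :
    GeodConvex T (A \ branch T r a) := by
  intro u hu v hv z hz
  refine ⟨hA u hu.1 v hv.1 hz, fun hza => ?_⟩
  have hua := mem_geodesic_of_mem_branch hT hza hu.2
  have hva := mem_geodesic_of_mem_branch hT hza hv.2
  have hru : T.dist r u < T.dist r a + T.dist a u := hT.connected.dist_triangle.lt_of_ne' hu.2
  have hrv : T.dist r v < T.dist r a + T.dist a v := hT.connected.dist_triangle.lt_of_ne' hv.2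
  have h4 := dist_four_point hT r z u v
  rw [mem_geodesic] at hz hua hva
  rw [mem_branch] at hza
  have := T.dist_comm (u := u) (v := z)
  omega

theorem GeodConvex.sdiff_of_inter_branch_eq (hT : T.IsTree) {A S : Set V} (hA : GeodConvex T A)
    {r a : V} (hS : A ∩ branch T r a = S) : GeodConvex T (A \ S) := by
  rw [← hS, Set.sdiff_self_inter]
  exact hA.sdiff_branch hT r a

theorem inter_branch_eq_singleton (hG : G.Connected) {A : Set V} {r y : V} (hy : y ∈ A)
    (hfar : ∀ z ∈ A ∩ branch G r y, G.dist r z ≤ G.dist r y) : A ∩ branch G r y = {y} := by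
  refine Set.eq_singleton_iff_unique_mem.2 ⟨⟨hy, right_mem_geodesic r y⟩, fun z hz => ?_⟩
  have hyz : G.dist r y + G.dist y z = G.dist r z := hz.2
  have := hfar z hz
  exact (hG.dist_eq_zero_iff.1 (by omega)).symm

end Geodesics

theorem fk_le_self (k n : ℕ) : fk k n ≤ n := by
  unfold fk
  split_ifs with h
  · exact le_rfl
  · have : 1 ≤ (n - k % 2) / (k / 2 + 1) := (Nat.one_le_div_iff (by omega)).2 (by omega)
    omega

theorem fk_succ_le (k n : ℕ) : fk k (n + 1) ≤ fk k n + 1 := by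
  by_cases hn : n ≤ k + 1
  · rw [show fk k n = n from if_pos hn]
    exact fk_le_self k (n + 1)
  · rw [fk, fk, if_neg hn, if_neg (by omega)]
    have : (n - k % 2) / (k / 2 + 1) ≤ (n + 1 - k % 2) / (k / 2 + 1) :=
      Nat.div_le_div_right (by omega)
    omega

theorem fk_add_le {k n : ℕ} (hn : k + 2 ≤ n + (k / 2 + 1)) :
    fk k (n + (k / 2 + 1)) ≤ fk k n + k / 2 := by
  have hdiv : (n + (k / 2 + 1) - k % 2) / (k / 2 + 1) = (n - k % 2) / (k / 2 + 1) + 1 := by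
    rw [Nat.sub_add_comm (by omega), Nat.add_div_right _ (Nat.succ_pos _)]
  have hpos : 1 ≤ (n - k % 2) / (k / 2 + 1) := (Nat.one_le_div_iff (by omega)).2 (by omega)
  rw [fk, fk, if_neg (by omega), hdiv]
  split_ifs <;> omega

section LowerBound

variable {V : Type*} [Finite V] {T : SimpleGraph V} {k : ℕ} {A : Set V} {a p r y : V}

/-- Deleting a leaf from the subtree on `A` never decreases the number of maximal distance-`k`
independent sets. -/
def LeafStable (T : SimpleGraph V) (k : ℕ) (A : Set V) : Prop :=
  ∀ y ∈ A, GeodConvex T (A \ {y}) → mdiOn T k A ≤ mdiOn T k (A \ {y})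

-- A deepest vertex `y` of the branch off the path from `a` to `p` would be a leaf whose ball
-- contains that of `p`, so deleting it would lose an independent set.
theorem LeafStable.inter_branch_subset_geodesic (hT : T.IsTree) (hA : GeodConvex T A)
    (hstable : LeafStable T k A) (hp : p ∈ A) (hpa : p ∈ branch T r a)
    (hfar : ∀ z ∈ A, T.dist r z ≤ T.dist r p) (hk : 2 * T.dist a p ≤ k) :
    A ∩ branch T r a ⊆ geodesic T a p := by
  by_contra hsub
  obtain ⟨y, ⟨⟨hyA, hya⟩, hyp⟩, hymax⟩ :=
    Set.exists_max_image ((A ∩ branch T r a) \ geodesic T a p) (T.dist r) (Set.toFinite _)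
      (Set.sdiff_nonempty.2 hsub)
  have hle {z : V} (hzA : z ∈ A) (hza : z ∈ branch T r a) : T.dist a z ≤ T.dist a p := by
    have := hfar z hzA
    rw [mem_branch] at hza hpa
    omega
  have hleaf : A ∩ branch T r y = {y} := by
    refine inter_branch_eq_singleton hT.connected hyA fun z ⟨hzA, hzy⟩ => ?_
    have hza : z ∈ branch T r a := geodesic_subset_geodesic hT.connected hzy hya
    have hyaz : y ∈ geodesic T a z := mem_geodesic_of_mem_geodesic hT.connected hzy hya
    have hzp : z ∉ geodesic T a p := fun hzp =>
      hyp (geodesic_subset_geodesic hT.connected hzp hyaz)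
    exact hymax z ⟨⟨hzA, hza⟩, hzp⟩
  have hball : ball T k p ∩ A ⊆ ball T k y := by
    rintro z ⟨hpz, hzA⟩
    have hyz : T.dist y z ≤ T.dist a y + T.dist a z :=
      T.dist_comm (u := a) (v := y) ▸ hT.connected.dist_triangle
    have hay := hle hyA hya
    by_cases hza : z ∈ branch T r a
    · have := hle hzA hza
      exact hyz.trans (by omega)
    · have hpaz := mem_geodesic_of_mem_branch hT hpa hza
      rw [mem_geodesic, T.dist_comm] at hpaz
      exact hyz.trans (le_trans (by omega) hpz)
  exact (mdiOn_sdiff_singleton_lt hyA hp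
    (fun hpy => hyp (hpy ▸ right_mem_geodesic a p)) hball).not_ge
    (hstable y hyA (hA.sdiff_of_inter_branch_eq hT hleaf))

-- Otherwise a maximal independent subset `S` of the sphere of radius `k + 2` about `p` keeps the
-- sphere of radius `k + 1` out of every independent superset `J` of `S ∪ {p}`. Then only `p` covers
-- its neighbour `w`, so `J` is not maximal without `p`.
theorem exists_ball_inter_subset_ball_succ (hT : T.IsTree) (hA : GeodConvex T A) (hp : p ∈ A)
    (hr : r ∈ A) (hrp : r ≠ p) (hle : mdiOn T k A ≤ mdiOn T k (A \ {p})) :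
    ∃ x ∈ A, T.dist p x = k + 1 ∧ ball T k x ∩ A ⊆ ball T (k + 1) p := by
  by_contra! hescape
  obtain ⟨w, hw, hpw⟩ := exists_mem_geodesic_dist_eq hT.connected
    (show 1 ≤ T.dist p r from hT.connected.pos_dist_of_ne hrp.symm)
  obtain ⟨S, -, hS⟩ := exists_maxDkIndepOn_superset (G := T) (k := k)
    (Set.empty_subset {z ∈ A | T.dist p z = k + 2}) (Set.pairwise_empty _)
  obtain ⟨hSA, hSindep, hSdom⟩ := maxDkIndepOn_iff_dominating.1 hS
  obtain ⟨J, hSJ, hJ⟩ := exists_maxDkIndepOn_superset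
    (Set.insert_subset hp fun z hz => (hSA hz).1)
    (hSindep.insert (v := p) fun z hz => by have := (hSA hz).2; omega)
  refine hle.not_gt (mdiOn_lt_of_not_maxDkIndepOn_inter Set.sdiff_subset hJ fun hJp => ?_)
  obtain ⟨y, ⟨hyJ, hyA, hyp⟩, hwy⟩ := (maxDkIndepOn_iff_dominating.1 hJp).2.2 w
    ⟨hA p hp r hr hw, by rintro rfl; simp at hpw⟩
  have hpy : T.dist p y = k + 1 := by
    have : k + 1 ≤ T.dist p y := hJ.prop.2 (hSJ (Or.inl rfl)) hyJ (Ne.symm hyp)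
    have : T.dist p y ≤ T.dist p w + T.dist w y := hT.connected.dist_triangle
    omega
  obtain ⟨z, ⟨hyz, hzA⟩, hpz⟩ := Set.not_subset.1 (hescape y hyA hpy)
  obtain ⟨u, hu, hpu, hyu⟩ := exists_mem_geodesic_dist_eq_dist_le hT
    (show T.dist p y < k + 2 by omega) (show k + 2 ≤ T.dist p z from Nat.lt_of_not_le hpz)
  obtain ⟨v, hvS, huv⟩ := hSdom u ⟨hA p hp z hzA hu, hpu⟩
  have hpv : T.dist p v = k + 2 := (hSA hvS).2
  have hyv : T.dist y v ≤ k := by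
    have h4 := dist_four_point hT p u y v
    rw [T.dist_comm (u := u) (v := y)] at h4
    have : T.dist y z ≤ k := hyz
    omega
  have := hJ.prop.2 hyJ (hSJ (Or.inr hvS)) (by rintro rfl; omega)
  omega

theorem LeafStable.exists_convex_ncard_add_eq (hT : T.IsTree) (hA : GeodConvex T A)
    (hstable : LeafStable T k A) (hr : r ∈ A) (hp : p ∈ A)
    (hfar : ∀ z ∈ A, T.dist r z ≤ T.dist r p) (hk : k < T.dist r p) :
    ∃ B, GeodConvex T B ∧ B.ncard + (k / 2 + 1) = A.ncard ∧
      mdiOn T k B + k / 2 ≤ mdiOn T k A := by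
  rw [T.dist_comm] at hk
  obtain ⟨a, ha, hpa⟩ := exists_mem_geodesic_dist_eq hT.connected
    (show k / 2 ≤ T.dist p r by omega)
  have hpbranch : p ∈ branch T r a := by rwa [branch, Set.mem_ofPred_eq, geodesic_comm]
  have haA : a ∈ A := hA p hp r hr ha
  have hpathA : geodesic T p a ⊆ A := hA p hp a haA
  have hbranch : A ∩ branch T r a = geodesic T p a := by
    rw [geodesic_comm]
    exact (hstable.inter_branch_subset_geodesic hT hA hp hpbranch hfar
      (by rw [T.dist_comm]; omega)).antisymm
      (Set.subset_inter (hA a haA p hp) (geodesic_subset_branch hT.connected hpbranch))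
  have hpleaf : A ∩ branch T r p = {p} :=
    inter_branch_eq_singleton hT.connected hp fun z hz => hfar z hz.1
  obtain ⟨x, hxA, hpx, hball⟩ := exists_ball_inter_subset_ball_succ hT hA hp hr
    (by rintro rfl; simp at hk) (hstable p hp (hA.sdiff_of_inter_branch_eq hT hpleaf))
  have hx : x ∉ geodesic T p a := fun hx => by rw [mem_geodesic] at hx; omega
  have hballs (y : V) (hy : y ∈ geodesic T p a \ {p}) : ball T k x ∩ A ⊆ ball T k y :=
    ball_inter_subset_ball_of_mem_geodesic hT hpbranch hbranch (by omega) hball hy.1 hy.2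
  have hgain := mdiOn_sdiff_add_ncard_le (Set.sdiff_subset.trans hpathA)
    ⟨hxA, fun h => hx h.1⟩ hballs
  have hmono : mdiOn T k (A \ geodesic T p a) ≤ mdiOn T k (A \ (geodesic T p a \ {p})) :=
    mdiOn_mono (Set.sdiff_subset_sdiff_right Set.sdiff_subset)
  have hncard : (geodesic T p a).ncard = k / 2 + 1 := by rw [ncard_geodesic hT, hpa]
  have hpath := Set.ncard_sdiff_singleton_add_one (left_mem_geodesic (G := T) p a) (Set.toFinite _)
  refine ⟨_, hA.sdiff_of_inter_branch_eq hT hbranch, ?_, by omega⟩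
  rw [← hncard, Set.ncard_sdiff_add_ncard_of_subset hpathA]

theorem fk_ncard_le_mdiOn (hT : T.IsTree) (hA : GeodConvex T A) : fk k A.ncard ≤ mdiOn T k A := by
  induction hn : A.ncard using Nat.strong_induction_on generalizing A with
  | _ n ih =>
    subst hn
    by_cases hdiam : ∀ u ∈ A, ∀ v ∈ A, T.dist u v ≤ k
    · rcases A.eq_empty_or_nonempty with rfl | hne
      · simp [fk]
      · exact mdiOn_eq_ncard hne hdiam ▸ fk_le_self k A.ncard
    push Not at hdiam
    obtain ⟨r, hr, q, hq, hrq⟩ := hdiam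
    obtain ⟨p, hp, hfar⟩ := Set.exists_max_image A (T.dist r) A.toFinite ⟨r, hr⟩
    have hrp : k < T.dist r p := hrq.trans_le (hfar q hq)
    by_cases hstable : LeafStable T k A
    · obtain ⟨B, hB, hBA, hmdi⟩ :=
        hstable.exists_convex_ncard_add_eq hT hA hr hp hfar hrp
      have hcard : T.dist r p + 1 ≤ A.ncard :=
        ncard_geodesic hT r p ▸ Set.ncard_le_ncard (hA r hr p hp)
      calc fk k A.ncard = fk k (B.ncard + (k / 2 + 1)) := by rw [hBA]
        _ ≤ fk k B.ncard + k / 2 := fk_add_le (by omega)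
        _ ≤ mdiOn T k B + k / 2 := by gcongr; exact ih _ (by omega) hB rfl
        _ ≤ mdiOn T k A := hmdi
    · simp only [LeafStable, not_forall, not_le] at hstable
      obtain ⟨y, hy, hconvex, hlt⟩ := hstable
      have hcard := Set.ncard_sdiff_singleton_add_one hy A.toFinite
      calc fk k A.ncard = fk k ((A \ {y}).ncard + 1) := by rw [hcard]
        _ ≤ fk k (A \ {y}).ncard + 1 := fk_succ_le _ _
        _ ≤ mdiOn T k (A \ {y}) + 1 := by gcongr; exact ih _ (by omega) hconvex rfl
        _ ≤ mdiOn T k A := hlt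

theorem fk_le_mdi (k : ℕ) (hT : T.IsTree) : fk k (Nat.card V) ≤ mdi T k := by
  rw [← mdiOn_univ, ← Set.ncard_univ]
  exact fk_ncard_le_mdiOn hT (geodConvex_univ T)

end LowerBound

theorem le_add_dist_of_forall_adj {V : Type*} {G : SimpleGraph V} (hG : G.Connected) {h : V → ℤ}
    (hadj : ∀ u v, G.Adj u v → h u ≤ h v + 1) (u v : V) : h u ≤ h v + G.dist u v := by
  obtain ⟨p, hp⟩ := hG.exists_walk_length_eq_dist u v
  rw [← hp]
  clear hp
  induction p with
  | nil => simp
  | @cons u w _ huw p ih =>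
    have := hadj u w huw
    rw [SimpleGraph.Walk.length_cons]
    push_cast
    omega

section ParentGraph

variable {V : Type*} {c : V} {parent : V → V} {depth : V → ℕ}

/-- The graph joining every vertex other than the root `c` to its parent. -/
def parentGraph (c : V) (parent : V → V) : SimpleGraph V :=
  SimpleGraph.fromRel fun u v => u ≠ c ∧ parent u = v

theorem parentGraph_adj {u v : V} : (parentGraph c parent).Adj u v ↔
    u ≠ v ∧ (u ≠ c ∧ parent u = v ∨ v ≠ c ∧ parent v = u) :=
  SimpleGraph.fromRel_adj _ u v

theorem parentGraph_adj_parent (hdepth : ∀ v ≠ c, depth (parent v) < depth v) {v : V}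
    (hv : v ≠ c) : (parentGraph c parent).Adj v (parent v) :=
  parentGraph_adj.2 ⟨fun h => (hdepth v hv).ne (congrArg depth h.symm), Or.inl ⟨hv, rfl⟩⟩

theorem exists_parentGraph_walk_length_le (hdepth : ∀ v ≠ c, depth (parent v) < depth v) (v : V) :
    ∃ p : (parentGraph c parent).Walk v c, p.length ≤ depth v := by
  induction hn : depth v using Nat.strong_induction_on generalizing v with
  | _ n ih =>
    by_cases hv : v = c
    · subst hv
      exact ⟨.nil, Nat.zero_le n⟩
    · have hlt := hdepth v hv
      obtain ⟨p, hp⟩ := ih _ (hn ▸ hlt) (parent v) rfl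
      refine ⟨.cons (parentGraph_adj_parent hdepth hv) p, ?_⟩
      rw [SimpleGraph.Walk.length_cons]
      omega

theorem parentGraph_connected (hdepth : ∀ v ≠ c, depth (parent v) < depth v) :
    (parentGraph c parent).Connected :=
  (SimpleGraph.connected_iff_exists_forall_reachable _).2
    ⟨c, fun v => (exists_parentGraph_walk_length_le hdepth v).choose.reachable.symm⟩

theorem parentGraph_dist_le (hdepth : ∀ v ≠ c, depth (parent v) < depth v) (u v : V) :
    (parentGraph c parent).dist u v ≤ depth u + depth v := by
  obtain ⟨p, hp⟩ := exists_parentGraph_walk_length_le hdepth u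
  obtain ⟨q, hq⟩ := exists_parentGraph_walk_length_le hdepth v
  refine (SimpleGraph.dist_le (p.append q.reverse)).trans ?_
  rw [SimpleGraph.Walk.length_append, SimpleGraph.Walk.length_reverse]
  omega

theorem parentGraph_isTree [Finite V] (hdepth : ∀ v ≠ c, depth (parent v) < depth v) :
    (parentGraph c parent).IsTree := by
  have hconn := parentGraph_connected hdepth
  refine (SimpleGraph.isTree_iff_connected_and_card).2
    ⟨hconn, le_antisymm ?_ hconn.card_vert_le_card_edgeSet_add_one⟩
  have hedges : (parentGraph c parent).edgeSet ⊆ (fun v => s(v, parent v)) '' {c}ᶜ := by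
    intro e
    induction e using Sym2.ind with
    | _ u v =>
      intro huv
      rw [SimpleGraph.mem_edgeSet, parentGraph_adj] at huv
      obtain ⟨-, ⟨hu, rfl⟩ | ⟨hv, rfl⟩⟩ := huv
      · exact ⟨u, hu, rfl⟩
      · exact ⟨v, hv, Sym2.eq_swap⟩
  calc (parentGraph c parent).edgeSet.ncard + 1 ≤ ({c}ᶜ : Set V).ncard + 1 := by
        gcongr
        exact (Set.ncard_le_ncard hedges).trans (Set.ncard_image_le (Set.toFinite _))
    _ = Nat.card V := by
        rw [← Set.ncard_singleton c, add_comm, Set.ncard_add_ncard_compl]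

end ParentGraph

section BalancedSpider

variable {m N : ℕ}

/-- The parent function of `balancedSpider m N`: the legs are the maximal runs
`j * m, …, j * m + m - 1` of vertices below the centre `N`, ordered towards the centre. -/
def spiderParent (m : ℕ) (i : Fin (N + 1)) : Fin (N + 1) :=
  if m ∣ i + 1 then Fin.last N else i + 1

/-- The spider on `N + 1` vertices with centre `N` whose legs have `m` vertices each, except that
the last leg may be shorter. -/
def balancedSpider (m N : ℕ) : SimpleGraph (Fin (N + 1)) :=
  parentGraph (Fin.last N) (spiderParent m)

/-- The distance of `i` to the centre of `balancedSpider m N`. -/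
def spiderDepth (m : ℕ) (i : Fin (N + 1)) : ℕ :=
  min ((i / m + 1) * m) N - i

theorem spiderDepth_last : spiderDepth m (Fin.last N) = 0 := by
  simp [spiderDepth]

theorem spiderParent_eq_last_or (hm : 0 < m) {i : Fin (N + 1)} (hi : i ≠ Fin.last N) :
    spiderParent m i = Fin.last N ∧ spiderDepth m i = 1 ∨
      (spiderParent m i : ℕ) / m = i / m ∧
        spiderDepth m (spiderParent m i) + 1 = spiderDepth m i := by
  have hiN : (i : ℕ) < N := Fin.val_lt_last hi
  have hdiv := Nat.succ_div (a := i) (b := m)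
  have hlt : (i : ℕ) < (i / m + 1) * m := Nat.lt_mul_of_div_lt (Nat.lt_succ_self _) hm
  by_cases hdvd : m ∣ i + 1
  · left
    refine ⟨if_pos hdvd, ?_⟩
    rw [if_pos hdvd] at hdiv
    rw [spiderDepth, ← hdiv, Nat.div_mul_cancel hdvd]
    omega
  · right
    have hval : ((spiderParent m i : Fin (N + 1)) : ℕ) = i + 1 := by
      rw [spiderParent, if_neg hdvd, Fin.val_add_one_of_lt (Fin.lt_last_iff_ne_last.2 hi)]
    rw [if_neg hdvd, add_zero] at hdiv
    rw [spiderDepth, spiderDepth, hval, hdiv]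
    exact ⟨rfl, by omega⟩

theorem spiderDepth_parent_lt (hm : 0 < m) (i : Fin (N + 1)) (hi : i ≠ Fin.last N) :
    spiderDepth m (spiderParent m i) < spiderDepth m i := by
  rcases spiderParent_eq_last_or hm hi with ⟨hlast, hone⟩ | ⟨-, hsucc⟩
  · rw [hlast, hone, spiderDepth_last]
    exact one_pos
  · omega

theorem balancedSpider_isTree (hm : 0 < m) : (balancedSpider m N).IsTree :=
  parentGraph_isTree (spiderDepth_parent_lt hm)

-- The depth, negated on the leg of `i`, changes by at most one along every edge.
theorem spiderDepth_add_le_dist (hm : 0 < m) {i j : Fin (N + 1)} (hij : (i : ℕ) / m ≠ j / m) :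
    spiderDepth m i + spiderDepth m j ≤ (balancedSpider m N).dist i j := by
  let height (l : Fin (N + 1)) : ℤ :=
    if (l : ℕ) / m = j / m then spiderDepth m l else -spiderDepth m l
  have hstep (l : Fin (N + 1)) (hl : l ≠ Fin.last N) :
      |height l - height (spiderParent m l)| ≤ 1 := by
    rw [abs_le]
    rcases spiderParent_eq_last_or hm hl with ⟨hlast, hone⟩ | ⟨hleg, hsucc⟩
    · simp only [height, hlast, hone, spiderDepth_last]
      split_ifs <;> simp
    · simp only [height, hleg, ← hsucc]
      split_ifs <;> push_cast <;> omega
  have hadj (u v : Fin (N + 1)) (huv : (balancedSpider m N).Adj u v) :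
      height u ≤ height v + 1 := by
    obtain ⟨-, ⟨hu, rfl⟩ | ⟨hv, rfl⟩⟩ := parentGraph_adj.1 huv
    · linarith [(abs_le.1 (hstep u hu)).2]
    · linarith [(abs_le.1 (hstep v hv)).1]
  have hlip := le_add_dist_of_forall_adj (balancedSpider_isTree hm).connected hadj j i
  rw [SimpleGraph.dist_comm] at hlip
  simp only [height, if_pos, if_neg hij] at hlip
  omega

theorem balancedSpider_dist_le_of_depth_le (hm : 0 < m) {s : ℕ} {i j : Fin (N + 1)}
    (hi : spiderDepth m i ≤ s) (hj : spiderDepth m j ≤ s) :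
    (balancedSpider m N).dist i j ≤ 2 * s :=
  (parentGraph_dist_le (spiderDepth_parent_lt hm) i j).trans (by omega)

/-- The leaves of the legs of `balancedSpider (k / 2 + 1) N` with `k / 2 + 1` vertices; for even `k`
also that of a last leg that is one vertex short. They are the leaves that are pairwise more than
`k` apart. -/
def spiderLeaves (k N : ℕ) : Set (Fin (N + 1)) :=
  {i | k / 2 + 1 ∣ (i : ℕ) ∧ i + (k / 2 + 1) + k % 2 ≤ N + 1}

theorem div_le_ncard_spiderLeaves (k N : ℕ) :
    (N + 1 - k % 2) / (k / 2 + 1) ≤ (spiderLeaves k N).ncard := by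
  have hmul {j : ℕ} (hj : j < (N + 1 - k % 2) / (k / 2 + 1)) :
      j * (k / 2 + 1) + (k / 2 + 1) ≤ N + 1 - k % 2 := by
    rw [← Nat.succ_mul]
    exact (Nat.mul_le_mul_right _ hj).trans (Nat.div_mul_le_self _ _)
  refine Set.le_ncard_of_inj_on_range (fun j => Fin.ofNat (N + 1) (j * (k / 2 + 1))) ?_ ?_
  · intro j hj
    have := hmul hj
    rw [spiderLeaves, Set.mem_ofPred_eq, Fin.val_ofNat, Nat.mod_eq_of_lt (by omega)]
    exact ⟨Nat.dvd_mul_left _ _, by omega⟩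
  · intro i hi j hj hij
    have := hmul hi
    have := hmul hj
    have hval := congrArg Fin.val hij
    simp only [Fin.val_ofNat] at hval
    rw [Nat.mod_eq_of_lt (by omega), Nat.mod_eq_of_lt (by omega)] at hval
    exact Nat.eq_of_mul_eq_mul_right (Nat.succ_pos _) hval

theorem spiderDepth_le_of_notMem_spiderLeaves {k : ℕ} {i : Fin (N + 1)}
    (hi : i ∉ spiderLeaves k N) : spiderDepth (k / 2 + 1) i ≤ k / 2 := by
  have hmod := Nat.div_add_mod' (i : ℕ) (k / 2 + 1)
  rw [spiderLeaves, Set.mem_ofPred_eq, Nat.dvd_iff_mod_eq_zero] at hi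
  rw [spiderDepth, Nat.succ_mul]
  omega

theorem dkIndep_spiderLeaves (k N : ℕ) :
    DkIndep (balancedSpider (k / 2 + 1) N) k (spiderLeaves k N) := by
  intro i hi j hj hij
  have hleg : (i : ℕ) / (k / 2 + 1) ≠ j / (k / 2 + 1) := fun h =>
    hij (Fin.ext (Nat.div_left_inj hi.1 hj.1 |>.1 h))
  refine le_trans ?_ (spiderDepth_add_le_dist (Nat.succ_pos _) hleg)
  have := hi.2
  have := hj.2
  rw [spiderDepth, spiderDepth, Nat.succ_mul, Nat.succ_mul, Nat.div_mul_cancel hi.1,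
    Nat.div_mul_cancel hj.1]
  omega

theorem mdi_balancedSpider_le (k N : ℕ) :
    mdi (balancedSpider (k / 2 + 1) N) k ≤ fk k (N + 1) := by
  by_cases hN : N + 1 ≤ k + 1
  · have hT : (balancedSpider (k / 2 + 1) N).IsTree := balancedSpider_isTree (Nat.succ_pos _)
    have hdist (i j : Fin (N + 1)) : (balancedSpider (k / 2 + 1) N).dist i j ≤ k := by
      have := Set.ncard_le_card (geodesic (balancedSpider (k / 2 + 1) N) i j)
      rw [ncard_geodesic hT, Nat.card_fin] at this
      omega
    rw [mdi_eq_card hdist, Nat.card_fin, fk, if_pos hN]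
  · have hfar : ∀ i ∉ spiderLeaves k N, ∀ j ∉ spiderLeaves k N,
        (balancedSpider (k / 2 + 1) N).dist i j ≤ k := fun i hi j hj =>
      (balancedSpider_dist_le_of_depth_le (Nat.succ_pos _)
        (spiderDepth_le_of_notMem_spiderLeaves hi)
        (spiderDepth_le_of_notMem_spiderLeaves hj)).trans (Nat.mul_div_le k 2)
    have hle := mdi_le_ncard_compl_add_one (dkIndep_spiderLeaves k N) hfar
    have hcompl := Set.ncard_add_ncard_compl (spiderLeaves k N)
    have hleaves := div_le_ncard_spiderLeaves k N
    rw [Nat.card_fin] at hcompl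
    rw [fk, if_neg hN]
    omega

end BalancedSpider

/-- For all `k ≥ 1` and `n ≥ 1`, every tree on `n` vertices has at least
`f_k(n)` maximal distance-`k` independent sets, and some tree on `n` vertices has
exactly `f_k(n)` of them. -/
theorem stmt_0 (k n : ℕ) (hk : 1 ≤ k) (hn : 1 ≤ n) :
    (∀ (V : Type) [Fintype V], Fintype.card V = n → ∀ T : SimpleGraph V, T.IsTree →
      fk k n ≤ mdi T k) ∧
    (∃ T : SimpleGraph (Fin n), T.IsTree ∧ mdi T k = fk k n) := by
  refine ⟨fun V _ hV T hT => ?_, ?_⟩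
  · rw [← hV, ← Nat.card_eq_fintype_card]
    exact fk_le_mdi k hT
  · obtain ⟨N, rfl⟩ := Nat.exists_eq_add_of_le' hn
    have hT : (balancedSpider (k / 2 + 1) N).IsTree := balancedSpider_isTree (Nat.succ_pos _)
    refine ⟨balancedSpider (k / 2 + 1) N, hT, (mdi_balancedSpider_le k N).antisymm ?_⟩
    simpa only [Nat.card_fin] using fk_le_mdi k hT
end

section
/- For every odd integer k ≥ 3: (i) a tree T of diameter k + 1 has no leaf that is a k-twin if and only if T is isomorphic to S_{p,⌊k/2⌋+1} for some p ≥ 2; (ii) a tree T of diameter k + 2 has no leaf that is a k-twin if and only if T is isomorphic to B_{p1,p2,⌊k/2⌋+1} for some p1, p2 ≥ 1. -/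
/-!
Root the tree at its centre: a vertex if the diameter `2m` is even, an edge if the diameter
`2m + 1` is odd, where `m = ⌊k/2⌋ + 1`, so that `k = 2m - 1`. The `k`-ball of a vertex of depth less
than `m` contains everything above its own core vertex, and its distances to the rest of the tree
depend only on its depth and core vertex. So a leaf at such a depth is a twin of the vertex of the
same depth on a path to a deepest vertex. Likewise two vertices of the same depth in one branch have
the same `k`-ball. Hence without twin leaves every branch is a path on `m` vertices, which
determines the tree. Conversely, if all branches are such paths, then the leaves are the vertices of
depth `m`; two of them lie in different branches, hence at distance at least `2m`, while some vertex
at distance `2m` from a leaf tells it apart from all vertices of smaller depth.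
-/

section Basic

variable {V W : Type*} {G : SimpleGraph V} {H : SimpleGraph W} {k : ℕ} {u v w ℓ : V}

/-- The property the two classifications are about: no leaf of `G` shares its closed `k`-ball
with another vertex. -/
def NoTwinLeaf (G : SimpleGraph V) (k : ℕ) : Prop :=
  ∀ ℓ, IsLeaf G ℓ → ¬ KTwin G k ℓ

theorem mem_ball : w ∈ ball G k v ↔ G.dist v w ≤ k :=
  Iff.rfl

theorem IsLeaf.eq_of_adj (hℓ : IsLeaf G ℓ) (hu : G.Adj ℓ u) (hv : G.Adj ℓ v) : u = v := by
  obtain ⟨a, ha⟩ := Set.ncard_eq_one.1 hℓ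
  rw [← SimpleGraph.mem_neighborSet, ha, Set.mem_singleton_iff] at hu hv
  rw [hu, hv]

theorem isLeaf_of_forall_adj_eq (hu : G.Adj ℓ u) (h : ∀ w, G.Adj ℓ w → w = u) : IsLeaf G ℓ :=
  Set.ncard_eq_one.2 ⟨u, Set.eq_singleton_iff_unique_mem.2 ⟨hu, h⟩⟩

theorem edist_map_le (f : G →g H) (u v : V) : H.edist (f u) (f v) ≤ G.edist u v :=
  le_iInf fun p => (SimpleGraph.edist_le (p.map f)).trans_eq (by rw [p.length_map])

theorem dist_iso (e : G ≃g H) (u v : V) : H.dist (e u) (e v) = G.dist u v := by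
  refine congrArg ENat.toNat (le_antisymm (edist_map_le e.toHom u v) ?_)
  simpa using edist_map_le e.symm.toHom (e u) (e v)

theorem NoTwinLeaf.of_iso (e : G ≃g H) (hH : NoTwinLeaf H k) : NoTwinLeaf G k := by
  rintro ℓ hℓ ⟨v, hvℓ, hball⟩
  have mem_ball_iso (x y : V) : e y ∈ ball H k (e x) ↔ y ∈ ball G k x := by
    rw [mem_ball, mem_ball, dist_iso]
  have neighborSet_iso : H.neighborSet (e ℓ) = e '' G.neighborSet ℓ := by
    ext y
    obtain ⟨y, rfl⟩ := e.surjective y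
    simp [e.map_adj_iff]
  refine hH (e ℓ) ?_ ⟨e v, e.injective.ne hvℓ, ?_⟩
  · rwa [IsLeaf, neighborSet_iso, Set.ncard_image_of_injective _ e.injective]
  · ext y
    obtain ⟨y, rfl⟩ := e.surjective y
    rw [mem_ball_iso, mem_ball_iso, hball]

theorem dist_le_gdiam [Fintype V] (G : SimpleGraph V) (u v : V) : G.dist u v ≤ gdiam G :=
  (Finset.le_sup (f := G.dist u) (Finset.mem_univ v)).trans
    (Finset.le_sup (f := ecc G) (Finset.mem_univ u))

theorem exists_dist_eq_gdiam [Fintype V] [Nonempty V] (G : SimpleGraph V) :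
    ∃ u v, G.dist u v = gdiam G := by
  obtain ⟨u, -, hu⟩ := Finset.exists_mem_eq_sup Finset.univ Finset.univ_nonempty (ecc G)
  obtain ⟨v, -, hv⟩ := Finset.exists_mem_eq_sup Finset.univ Finset.univ_nonempty (G.dist u)
  exact ⟨u, v, by rw [gdiam, hu, ecc, hv]⟩

theorem exists_dist_eq_and_dist_eq (hG : G.Connected) {i j : ℕ} (h : G.dist u v = i + j) :
    ∃ c, G.dist u c = i ∧ G.dist c v = j := by
  obtain ⟨p, hp⟩ := hG.exists_walk_length_eq_dist u v
  have hu := SimpleGraph.dist_le (p.take i)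
  have hv := SimpleGraph.dist_le (p.drop i)
  have huv := hG.dist_triangle (u := u) (v := p.getVert i) (w := v)
  rw [SimpleGraph.Walk.take_length] at hu
  rw [SimpleGraph.Walk.drop_length] at hv
  exact ⟨p.getVert i, by lia, by lia⟩

end Basic

/-- A rooting of `G` at a clique: the vertices of depth `0`, the core, are pairwise adjacent, and
every other edge joins a vertex to its parent, which is one step closer to the core. A core vertex
is its own parent. -/
structure CliqueRooting {V : Type*} (G : SimpleGraph V) where
  depth : V → ℕ
  parent : V → V
  parent_of_depth_eq_zero : ∀ {v}, depth v = 0 → parent v = v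
  depth_parent : ∀ v, depth (parent v) = depth v - 1
  adj_iff : ∀ u v, G.Adj u v ↔ u ≠ v ∧ (depth u = 0 ∧ depth v = 0 ∨ parent u = v ∨ parent v = u)

namespace CliqueRooting

variable {V : Type*} {G : SimpleGraph V} (R : CliqueRooting G) {u v w : V}

section Ancestors

theorem adj_parent (hv : 0 < R.depth v) : G.Adj v (R.parent v) := by
  refine (R.adj_iff _ _).2 ⟨fun h => ?_, .inr (.inl rfl)⟩
  have := R.depth_parent v
  rw [← h] at this
  lia

theorem depth_le_of_adj (h : G.Adj u v) : R.depth u ≤ R.depth v + 1 := by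
  obtain ⟨-, ⟨hu, -⟩ | rfl | rfl⟩ := (R.adj_iff u v).1 h
  · lia
  · have := R.depth_parent u
    lia
  · have := R.depth_parent v
    lia

theorem depth_iterate_parent (n : ℕ) (v : V) : R.depth (R.parent^[n] v) = R.depth v - n := by
  induction n with
  | zero => rfl
  | succ n ih => rw [Function.iterate_succ_apply', R.depth_parent, ih, Nat.sub_sub]

/-- The ancestor of `v` of depth `1`, which names the branch of `v`; a core vertex is its own
top. -/
def top (v : V) : V :=
  R.parent^[R.depth v - 1] v

/-- The core vertex above `v`. -/
def base (v : V) : V :=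
  R.parent (R.top v)

theorem depth_top (v : V) : R.depth (R.top v) = min (R.depth v) 1 := by
  rw [top, depth_iterate_parent]
  lia

theorem depth_base (v : V) : R.depth (R.base v) = 0 := by
  rw [base, depth_parent, depth_top]
  lia

theorem top_eq_self (hv : R.depth v ≤ 1) : R.top v = v := by
  rw [top, Nat.sub_eq_zero_of_le hv, Function.iterate_zero_apply]

theorem base_eq_self (hv : R.depth v = 0) : R.base v = v := by
  rw [base, R.top_eq_self (by lia), R.parent_of_depth_eq_zero hv]

theorem top_parent (hv : 2 ≤ R.depth v) : R.top (R.parent v) = R.top v := by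
  rw [top, top, depth_parent, ← Function.iterate_succ_apply]
  congr 2
  lia

theorem base_parent (v : V) : R.base (R.parent v) = R.base v := by
  obtain hv | hv | hv : R.depth v = 0 ∨ R.depth v = 1 ∨ 2 ≤ R.depth v := by lia
  · rw [R.parent_of_depth_eq_zero hv]
  · rw [R.base_eq_self (by rw [depth_parent, hv]), base, R.top_eq_self hv.le]
  · rw [base, R.top_parent hv, base]

theorem base_eq_of_top_eq (h : R.top u = R.top v) : R.base u = R.base v :=
  congrArg R.parent h

theorem apply_top {α : Type*} {g : V → α} (hg : ∀ v, 2 ≤ R.depth v → g (R.parent v) = g v)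
    (v : V) : g (R.top v) = g v := by
  induction hn : R.depth v using Nat.strong_induction_on generalizing v with
  | h n ih =>
    obtain hv | hv := Nat.lt_or_ge 1 (R.depth v)
    · rw [← R.top_parent hv, ih _ (by rw [depth_parent]; lia) _ rfl, hg v hv]
    · rw [R.top_eq_self hv]

theorem apply_base {α : Type*} {g : V → α} (hg : ∀ v, g (R.parent v) = g v) (v : V) :
    g (R.base v) = g v := by
  rw [base, hg, R.apply_top fun v _ => hg v]

theorem base_iterate_parent (n : ℕ) (v : V) : R.base (R.parent^[n] v) = R.base v := by
  induction n with
  | zero => rfl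
  | succ n ih => rw [Function.iterate_succ_apply', base_parent, ih]

theorem depth_of_parent_eq (hv : 0 < R.depth v) (h : R.parent w = v) :
    R.depth w = R.depth v + 1 := by
  have := R.depth_parent w
  rw [h] at this
  lia

theorem top_of_parent_eq (hv : 0 < R.depth v) (h : R.parent w = v) : R.top w = R.top v := by
  rw [← h, R.top_parent (by rw [R.depth_of_parent_eq hv h]; lia)]

end Ancestors

section Distance

theorem exists_walk_iterate_parent (n : ℕ) (v : V) :
    ∃ p : G.Walk v (R.parent^[n] v), p.length ≤ n := by
  induction n generalizing v with
  | zero => exact ⟨.nil, le_rfl⟩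
  | succ n ih =>
    rw [Function.iterate_succ_apply]
    obtain hv | hv := Nat.eq_zero_or_pos (R.depth v)
    · rw [R.parent_of_depth_eq_zero hv]
      obtain ⟨p, hp⟩ := ih v
      exact ⟨p, hp.trans n.le_succ⟩
    · obtain ⟨p, hp⟩ := ih (R.parent v)
      exact ⟨.cons (R.adj_parent hv) p, Nat.succ_le_succ hp⟩

theorem dist_iterate_parent_le (n : ℕ) (v : V) : G.dist v (R.parent^[n] v) ≤ n :=
  let ⟨p, hp⟩ := R.exists_walk_iterate_parent n v
  (SimpleGraph.dist_le p).trans hp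

theorem base_eq_iterate_parent (v : V) : R.base v = R.parent^[R.depth v] v := by
  obtain hv | hv := Nat.eq_zero_or_pos (R.depth v)
  · rw [R.base_eq_self hv, hv, Function.iterate_zero_apply]
  · rw [base, top, ← Function.iterate_succ_apply' R.parent, Nat.succ_eq_add_one,
      Nat.sub_add_cancel hv]

theorem adj_base (h : R.base u ≠ R.base v) : G.Adj (R.base u) (R.base v) :=
  (R.adj_iff _ _).2 ⟨h, .inl ⟨R.depth_base u, R.depth_base v⟩⟩

include R in
theorem preconnected : G.Preconnected := by
  have reachable_base (v : V) : G.Reachable v (R.base v) := by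
    rw [base_eq_iterate_parent]
    exact (R.exists_walk_iterate_parent _ v).choose.reachable
  intro u v
  refine (reachable_base u).trans (.trans ?_ (reachable_base v).symm)
  obtain h | h := eq_or_ne (R.base u) (R.base v)
  · rw [h]
  · exact (R.adj_base h).reachable

include R in
theorem dist_triangle (u v w : V) : G.dist u w ≤ G.dist u v + G.dist v w :=
  (R.preconnected u v).dist_triangle_left w

theorem dist_le (u v : V) :
    G.dist u v ≤ R.depth u + G.dist (R.base u) (R.base v) + R.depth v := by
  have hu := R.dist_iterate_parent_le (R.depth u) u
  have hv := R.dist_iterate_parent_le (R.depth v) v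
  rw [← base_eq_iterate_parent] at hu hv
  rw [SimpleGraph.dist_comm] at hv
  have := R.dist_triangle u (R.base u) v
  have := R.dist_triangle (R.base u) (R.base v) v
  lia

theorem dist_le_of_top_eq (h : R.top u = R.top v) :
    G.dist u v ≤ R.depth u - 1 + (R.depth v - 1) := by
  have hu := R.dist_iterate_parent_le (R.depth u - 1) u
  have hv := R.dist_iterate_parent_le (R.depth v - 1) v
  rw [SimpleGraph.dist_comm] at hv
  change G.dist u (R.top u) ≤ _ at hu
  change G.dist (R.top v) v ≤ _ at hv
  have := R.dist_triangle u (R.top u) v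
  rw [h] at this hu
  lia

theorem depth_add_dist_base_add_depth_le_one (hadj : G.Adj u v) (h : R.top u ≠ R.top v) :
    R.depth u + G.dist (R.base u) (R.base v) + R.depth v ≤ 1 := by
  have of_parent {u : V} (hu : R.top (R.parent u) ≠ R.top u) :
      R.depth u + G.dist (R.base u) (R.base (R.parent u)) + R.depth (R.parent u) ≤ 1 := by
    have : R.depth u < 2 := by
      by_contra! hu'
      exact hu (R.top_parent hu')
    rw [base_parent, SimpleGraph.dist_self, depth_parent]
    lia
  obtain ⟨-, ⟨hu, hv⟩ | rfl | rfl⟩ := (R.adj_iff u v).1 hadj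
  · rw [R.base_eq_self hu, R.base_eq_self hv, SimpleGraph.dist_eq_one_iff_adj.2 hadj, hu, hv]
  · exact of_parent h.symm
  · have := of_parent h
    rw [SimpleGraph.dist_comm] at this
    lia

theorem depth_le_depth_add_length (p : G.Walk u v) : R.depth u ≤ R.depth v + p.length := by
  induction p with
  | nil => simp
  | cons hadj p ih =>
    have := R.depth_le_of_adj hadj
    rw [SimpleGraph.Walk.length_cons]
    lia

theorem depth_add_dist_base_add_depth_le_length (p : G.Walk u v) (h : R.top u ≠ R.top v) :
    R.depth u + G.dist (R.base u) (R.base v) + R.depth v ≤ p.length := by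
  induction p with
  | nil => exact absurd rfl h
  | @cons u w v hadj p ih =>
    rw [SimpleGraph.Walk.length_cons]
    by_cases huw : R.top u = R.top w
    · have := R.depth_le_of_adj hadj
      have := ih (huw ▸ h)
      rw [R.base_eq_of_top_eq huw]
      lia
    have hedge := R.depth_add_dist_base_add_depth_le_one hadj huw
    by_cases hwv : R.top w = R.top v
    · have := R.depth_le_depth_add_length p.reverse
      rw [SimpleGraph.Walk.length_reverse] at this
      rw [R.base_eq_of_top_eq hwv] at hedge
      lia
    · have := ih hwv
      have := R.dist_triangle (R.base u) (R.base w) (R.base v)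
      lia

theorem dist_eq_of_top_ne (h : R.top u ≠ R.top v) :
    G.dist u v = R.depth u + G.dist (R.base u) (R.base v) + R.depth v := by
  obtain ⟨p, hp⟩ := (R.preconnected u v).exists_walk_length_eq_dist
  exact (R.dist_le u v).antisymm (hp ▸ R.depth_add_dist_base_add_depth_le_length p h)

theorem dist_base_le_one (u v : V) : G.dist (R.base u) (R.base v) ≤ 1 := by
  obtain h | h := eq_or_ne (R.base u) (R.base v)
  · simp [h]
  · exact (SimpleGraph.dist_eq_one_iff_adj.2 (R.adj_base h)).le

end Distance

section Leaves

theorem isLeaf_of_forall_parent_ne (hv : 0 < R.depth v) (h : ∀ w, R.parent w ≠ v) :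
    IsLeaf G v := by
  refine isLeaf_of_forall_adj_eq (R.adj_parent hv) fun w hw => ?_
  obtain ⟨-, ⟨hv', -⟩ | hw | hw⟩ := (R.adj_iff v w).1 hw
  · lia
  · exact hw.symm
  · exact absurd hw (h w)

theorem parent_ne_of_isLeaf (hleaf : IsLeaf G v) (hv : 0 < R.depth v) (w : V) :
    R.parent w ≠ v := by
  intro hw
  have hdw := R.depth_of_parent_eq hv hw
  have hwv : G.Adj v w := hw ▸ (R.adj_parent (v := w) (by lia)).symm
  have hdv := R.depth_parent v
  rw [hleaf.eq_of_adj (R.adj_parent hv) hwv] at hdv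
  lia

theorem adj_base_top (hv : 0 < R.depth v) : G.Adj (R.base v) (R.top v) :=
  (R.adj_parent (by rw [depth_top]; lia)).symm

end Leaves

section Balls

variable {k m : ℕ}

theorem ball_eq_of_base_eq (hdepth : ∀ v, R.depth v ≤ m) (hk : k + 1 = 2 * m)
    (hbase : R.base u = R.base v) (huv : R.depth u = R.depth v) (hu : R.depth u < m) :
    ball G k u = ball G k v := by
  have mem_ball_of_base_eq {x y : V} (hx : R.depth x < m) (hxy : R.base x = R.base y) :
      y ∈ ball G k x := by
    have := R.dist_le x y
    rw [hxy, SimpleGraph.dist_self] at this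
    have := hdepth y
    rw [mem_ball]
    lia
  ext w
  by_cases hw : R.base u = R.base w
  · exact iff_of_true (mem_ball_of_base_eq hu hw)
      (mem_ball_of_base_eq (huv ▸ hu) (hbase.symm.trans hw))
  · have hdist : G.dist u w = G.dist v w := by
      rw [R.dist_eq_of_top_ne (mt R.base_eq_of_top_eq hw),
        R.dist_eq_of_top_ne (u := v) (mt R.base_eq_of_top_eq (hbase ▸ hw)), hbase, huv]
    rw [mem_ball, mem_ball, hdist]

theorem ball_eq_of_top_eq (hdepth : ∀ v, R.depth v ≤ m) (hk : k + 1 = 2 * m)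
    (htop : R.top u = R.top v) (huv : R.depth u = R.depth v) : ball G k u = ball G k v := by
  have mem_ball_of_top_eq {x y : V} (hxy : R.top x = R.top y) : y ∈ ball G k x := by
    have := R.dist_le_of_top_eq hxy
    have := hdepth x
    have := hdepth y
    rw [mem_ball]
    lia
  ext w
  by_cases hw : R.top u = R.top w
  · exact iff_of_true (mem_ball_of_top_eq hw) (mem_ball_of_top_eq (htop.symm.trans hw))
  · have hdist : G.dist u w = G.dist v w := by
      rw [R.dist_eq_of_top_ne hw, R.dist_eq_of_top_ne (u := v) (htop ▸ hw),
        R.base_eq_of_top_eq htop, huv]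
    rw [mem_ball, mem_ball, hdist]

end Balls

/-- A rooting of height `m` which reaches depth `m` above every core vertex, and in at least two
branches. This is what a diametral pair provides when the core is the centre of a tree. -/
structure IsBalanced (m : ℕ) : Prop where
  depth_le : ∀ v, R.depth v ≤ m
  exists_base_eq : ∀ v, ∃ z, R.depth z = m ∧ R.base z = R.base v
  exists_top_ne : ∀ v, ∃ z, R.depth z = m ∧ R.top z ≠ R.top v

/-- Every branch of the rooting is a path on `m` vertices. -/
structure HasLegs (m : ℕ) : Prop where
  depth_le : ∀ v, R.depth v ≤ m
  eq_of_top_eq : ∀ {u v}, R.top u = R.top v → R.depth u = R.depth v → u = v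
  exists_child : ∀ {v}, 0 < R.depth v → R.depth v < m → ∃ w, R.parent w = v

section NoTwinLeaf

variable {R} {k m : ℕ} {x y ℓ : V}

theorem isBalanced_of_forall_dist_le (hx : R.depth x = m) (hy : R.depth y = m)
    (htop : R.top x ≠ R.top y) (hbase : ∀ v, R.base v = R.base x ∨ R.base v = R.base y)
    (hdist : ∀ u v, G.dist u v ≤ G.dist x y) : R.IsBalanced m := by
  have depth_le_of_base_eq {x y v : V} (hx : R.depth x = m) (hy : R.depth y = m)
      (htop : R.top x ≠ R.top y) (hdist : ∀ u v, G.dist u v ≤ G.dist x y)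
      (hv : R.base v = R.base x) : R.depth v ≤ m := by
    have hxy := R.dist_eq_of_top_ne htop
    by_cases hvy : R.top v = R.top y
    · have := R.dist_eq_of_top_ne (hvy ▸ htop)
      have := hdist x v
      rw [R.base_eq_of_top_eq hvy] at *
      lia
    · have := R.dist_eq_of_top_ne hvy
      have := hdist v y
      rw [hv] at *
      lia
  refine ⟨fun v => ?_, fun v => ?_, fun v => ?_⟩
  · obtain hv | hv := hbase v
    · exact depth_le_of_base_eq hx hy htop hdist hv
    · exact depth_le_of_base_eq hy hx htop.symm (G.dist_comm (u := x) ▸ hdist) hv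
  · exact (hbase v).elim (fun hv => ⟨x, hx, hv.symm⟩) fun hv => ⟨y, hy, hv.symm⟩
  · by_cases hv : R.top x = R.top v
    · exact ⟨y, hy, fun h => htop (hv.trans h.symm)⟩
    · exact ⟨x, hx, hv⟩

namespace IsBalanced

theorem depth_pos_of_isLeaf (hR : R.IsBalanced m) (hm : 0 < m) (hℓ : IsLeaf G ℓ) :
    0 < R.depth ℓ := by
  rw [Nat.pos_iff_ne_zero]
  intro hcore
  obtain ⟨z, hz, hzℓ⟩ := hR.exists_base_eq ℓ
  obtain ⟨z', hz', htop⟩ := hR.exists_top_ne z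
  rw [R.base_eq_self hcore] at hzℓ
  have hadj : G.Adj ℓ (R.top z) := hzℓ ▸ R.adj_base_top (hz ▸ hm)
  by_cases hz'ℓ : R.base z' = ℓ
  · exact htop (hℓ.eq_of_adj (hz'ℓ ▸ R.adj_base_top (hz' ▸ hm)) hadj)
  · have hadj' : G.Adj ℓ (R.base z') := hzℓ ▸ R.adj_base (by rwa [hzℓ, ne_comm])
    have := R.depth_top z
    rw [hℓ.eq_of_adj hadj hadj', depth_base] at this
    lia

theorem exists_antipode (hR : R.IsBalanced m) (hm : 0 < m) (hℓ : R.depth ℓ = m) :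
    ∃ z, G.dist ℓ z = 2 * m ∧ ∀ v, 2 * m ≤ G.dist v z → R.depth v = m := by
  by_cases hcore : ∀ v, R.base v = R.base ℓ
  · obtain ⟨z, hz, htop⟩ := hR.exists_top_ne ℓ
    refine ⟨z, ?_, fun v hv => (hR.depth_le v).antisymm ?_⟩
    · rw [R.dist_eq_of_top_ne htop.symm, hcore z, SimpleGraph.dist_self]
      lia
    · have := R.dist_le v z
      rw [hcore v, hcore z, SimpleGraph.dist_self] at this
      lia
  · push Not at hcore
    obtain ⟨c, hc⟩ := hcore
    obtain ⟨y, hy, hyc⟩ := hR.exists_base_eq c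
    have hz : R.depth (R.parent y) = m - 1 := hy ▸ R.depth_parent y
    have hbase : R.base ℓ ≠ R.base (R.parent y) := by rwa [base_parent, hyc, ne_comm]
    refine ⟨R.parent y, ?_, fun v hv => (hR.depth_le v).antisymm ?_⟩
    · rw [R.dist_eq_of_top_ne (mt R.base_eq_of_top_eq hbase),
        SimpleGraph.dist_eq_one_iff_adj.2 (R.adj_base hbase)]
      lia
    · have := R.dist_le v (R.parent y)
      have := R.dist_base_le_one v (R.parent y)
      lia

theorem exists_child_of_noTwinLeaf (hR : R.IsBalanced m) (hk : k + 1 = 2 * m)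
    (h : NoTwinLeaf G k) (hv : 0 < R.depth v) (hvm : R.depth v < m) : ∃ w, R.parent w = v := by
  by_contra! hchild
  obtain ⟨z, hz, hzv⟩ := hR.exists_base_eq v
  obtain ⟨n, hn⟩ := Nat.exists_eq_add_of_lt hvm
  have hdepth : R.depth (R.parent^[n + 1] z) = R.depth v := by
    rw [depth_iterate_parent]
    lia
  refine h v (R.isLeaf_of_forall_parent_ne hv hchild) ⟨R.parent^[n + 1] z, ?_, ?_⟩
  · rw [Function.iterate_succ_apply']
    exact hchild _
  · exact R.ball_eq_of_base_eq hR.depth_le hk (by rw [base_iterate_parent, hzv]) hdepth.symm hvm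

theorem eq_of_top_eq_of_noTwinLeaf (hR : R.IsBalanced m) (hk : k + 1 = 2 * m)
    (h : NoTwinLeaf G k) (htop : R.top u = R.top v) (hdepth : R.depth u = R.depth v) : u = v := by
  induction hn : m - R.depth u generalizing u v with
  | zero =>
    have hu : R.depth u = m := (hR.depth_le u).antisymm (Nat.sub_eq_zero_iff_le.1 hn)
    have hpos : 0 < R.depth u := by lia
    have hchild (w : V) : R.parent w ≠ u := fun hw => by
      have := R.depth_of_parent_eq hpos hw
      have := hR.depth_le w
      lia
    by_contra! hne
    exact h u (R.isLeaf_of_forall_parent_ne hpos hchild)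
      ⟨v, hne.symm, R.ball_eq_of_top_eq hR.depth_le hk htop hdepth⟩
  | succ n ih =>
    obtain hu | hu := Nat.eq_zero_or_pos (R.depth u)
    · rwa [R.top_eq_self (by lia), R.top_eq_self (by lia)] at htop
    have hv : 0 < R.depth v := hdepth ▸ hu
    obtain ⟨u', hu'⟩ := hR.exists_child_of_noTwinLeaf hk h hu (by lia)
    obtain ⟨v', hv'⟩ := hR.exists_child_of_noTwinLeaf hk h hv (by lia)
    have hdu := R.depth_of_parent_eq hu hu'
    have hdv := R.depth_of_parent_eq hv hv'
    have htop' : R.top u' = R.top v' := by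
      rw [R.top_of_parent_eq hu hu', R.top_of_parent_eq hv hv', htop]
    rw [← hu', ← hv', ih htop' (by lia) (by lia)]

theorem noTwinLeaf_of_hasLegs (hR : R.IsBalanced m) (hk : k + 1 = 2 * m) (hL : R.HasLegs m) :
    NoTwinLeaf G k := by
  rintro ℓ hℓ ⟨v, hvℓ, hball⟩
  have hm : 0 < m := by lia
  have hpos := hR.depth_pos_of_isLeaf hm hℓ
  have hdepth : R.depth ℓ = m := by
    by_contra! hne
    obtain ⟨w, hw⟩ := hL.exists_child hpos ((hR.depth_le ℓ).lt_of_ne hne)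
    exact R.parent_ne_of_isLeaf hℓ hpos w hw
  obtain ⟨z, hz, hfar⟩ := hR.exists_antipode hm hdepth
  have hv : R.depth v = m := by
    have : z ∉ ball G k v := by
      rw [← hball, mem_ball]
      lia
    exact hfar v (by rw [mem_ball] at this; lia)
  have htop : R.top v ≠ R.top ℓ := fun h => hvℓ (hL.eq_of_top_eq h (hv.trans hdepth.symm))
  have hclose : ℓ ∈ ball G k v := by
    rw [← hball, mem_ball, SimpleGraph.dist_self]
    lia
  rw [mem_ball, R.dist_eq_of_top_ne htop] at hclose
  lia

theorem noTwinLeaf_iff_hasLegs (hR : R.IsBalanced m) (hk : k + 1 = 2 * m) :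
    NoTwinLeaf G k ↔ R.HasLegs m :=
  ⟨fun h => ⟨hR.depth_le, hR.eq_of_top_eq_of_noTwinLeaf hk h, hR.exists_child_of_noTwinLeaf hk h⟩,
    hR.noTwinLeaf_of_hasLegs hk⟩

end IsBalanced

end NoTwinLeaf

section Iso

variable {R} {W : Type*} {H : SimpleGraph W} {S : CliqueRooting H} {m : ℕ}

/-- A bijection which respects depths and parents is a graph isomorphism. -/
def isoOfEquiv (e : V ≃ W) (hdepth : ∀ v, S.depth (e v) = R.depth v)
    (hparent : ∀ v, S.parent (e v) = e (R.parent v)) : G ≃g H where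
  toEquiv := e
  map_rel_iff' := by
    simp only [R.adj_iff, S.adj_iff, hdepth, hparent, ne_eq, e.injective.eq_iff, implies_true]

theorem HasLegs.exists_top_eq (hR : R.HasLegs m) {d : ℕ} (hd : d ≤ m)
    (hv : R.depth v = min d 1) : ∃ w, R.depth w = d ∧ R.top w = v := by
  induction d with
  | zero => exact ⟨v, hv, R.top_eq_self (by lia)⟩
  | succ d ih =>
    obtain rfl | hpos := Nat.eq_zero_or_pos d
    · exact ⟨v, hv, R.top_eq_self (by lia)⟩
    · obtain ⟨u, hu, htop⟩ := ih (by lia) (by lia)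
      obtain ⟨w, hw⟩ := hR.exists_child (hu ▸ hpos) (by lia)
      exact ⟨w, hu ▸ R.depth_of_parent_eq (hu ▸ hpos) hw,
        (R.top_of_parent_eq (hu ▸ hpos) hw).trans htop⟩

theorem HasLegs.parent_eq_of_top_eq (hS : S.HasLegs m) {f φ : V → W}
    (hf : ∀ t, R.depth t = 1 → S.parent (f t) = f (R.parent t))
    (hdepth : ∀ v, S.depth (φ v) = R.depth v) (htop : ∀ v, S.top (φ v) = f (R.top v)) (v : V) :
    S.parent (φ v) = φ (R.parent v) := by
  refine hS.eq_of_top_eq ?_ (by rw [depth_parent, hdepth, hdepth, depth_parent])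
  have hφ := hdepth v
  obtain hv | hv | hv : R.depth v = 0 ∨ R.depth v = 1 ∨ 2 ≤ R.depth v := by lia
  · rw [R.parent_of_depth_eq_zero hv, S.parent_of_depth_eq_zero (hφ.trans hv)]
  · rw [htop, R.top_eq_self (v := R.parent v) (by rw [depth_parent]; lia), ← hf v hv,
      S.top_eq_self (by rw [depth_parent]; lia), ← S.top_eq_self (v := φ v) (by lia), htop,
      R.top_eq_self hv.le]
  · rw [htop, R.top_parent hv, S.top_parent (by lia), htop]

theorem HasLegs.nonempty_iso (hR : R.HasLegs m) (hS : S.HasLegs m) {f : V → W}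
    (hbij : ∀ d ≤ 1, Set.BijOn f {v | R.depth v = d} {w | S.depth w = d})
    (hparent : ∀ t, R.depth t = 1 → S.parent (f t) = f (R.parent t)) : Nonempty (G ≃g H) := by
  have depth_f_top (v : V) : S.depth (f (R.top v)) = min (R.depth v) 1 :=
    (hbij _ (min_le_right _ _)).mapsTo (R.depth_top v)
  choose φ hdepth htop using fun v => hS.exists_top_eq (hR.depth_le v) (depth_f_top v)
  have φ_injective : φ.Injective := fun u v huv => by
    have huv' : R.depth u = R.depth v := by rw [← hdepth, huv, hdepth]
    refine hR.eq_of_top_eq ?_ huv'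
    refine (hbij _ (min_le_right _ _)).injOn (R.depth_top u) (huv' ▸ R.depth_top v) ?_
    rw [← htop, huv, htop]
  have φ_surjective : φ.Surjective := fun w => by
    obtain ⟨t, ht, htw⟩ := (hbij _ (min_le_right _ _)).surjOn (S.depth_top w)
    obtain ⟨v, hv, hvt⟩ := hR.exists_top_eq (hS.depth_le w) ht
    exact ⟨v, hS.eq_of_top_eq (by rw [htop, hvt, htw]) (by rw [hdepth, hv])⟩
  exact ⟨isoOfEquiv (.ofBijective φ ⟨φ_injective, φ_surjective⟩) hdepth
    (hS.parent_eq_of_top_eq hparent hdepth htop)⟩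

end Iso

end CliqueRooting

open CliqueRooting

section Models

variable {p q m : ℕ}

/-- The rooting of the spider at its centre. -/
def spiderRooting (p m : ℕ) : CliqueRooting (spider p m) where
  depth
    | none => 0
    | some (_, j) => j + 1
  parent
    | none => none
    | some (_, ⟨0, _⟩) => none
    | some (i, ⟨j + 1, h⟩) => some (i, ⟨j, Nat.lt_of_succ_lt h⟩)
  parent_of_depth_eq_zero := by
    rintro (_ | ⟨i, j⟩) h
    · rfl
    · simp at h
  depth_parent := by
    rintro (_ | ⟨i, ⟨_ | j, h⟩⟩) <;> rfl
  adj_iff := by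
    rintro (_ | ⟨i, ⟨_ | j, h⟩⟩) (_ | ⟨i', ⟨_ | j', h'⟩⟩) <;>
      grind [spider, SimpleGraph.fromRel_adj]

theorem spiderRooting_depth_eq_zero {v : Option (Fin p × Fin m)} :
    (spiderRooting p m).depth v = 0 ↔ v = none := by
  obtain _ | ⟨i, j⟩ := v
  · exact iff_of_true rfl rfl
  · exact iff_of_false (Nat.succ_ne_zero _) (Option.some_ne_none _)

theorem map_fst_eq_of_top_eq {u v : Option (Fin p × Fin m)}
    (h : (spiderRooting p m).top u = (spiderRooting p m).top v) :
    u.map Prod.fst = v.map Prod.fst := by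
  have map_fst_top := (spiderRooting p m).apply_top (g := Option.map Prod.fst) <| by
    rintro (_ | ⟨i, ⟨_ | j, hj⟩⟩) hv
    · rfl
    · exact absurd hv (by decide : ¬2 ≤ 0 + 1)
    · rfl
  rw [← map_fst_top u, h, map_fst_top]

theorem spiderRooting_hasLegs (p m : ℕ) : (spiderRooting p m).HasLegs m where
  depth_le := by
    rintro (_ | ⟨_, j⟩)
    · exact m.zero_le
    · exact j.isLt
  eq_of_top_eq := by
    rintro (_ | ⟨i, j⟩) (_ | ⟨i', j'⟩) htop hdepth
    · rfl
    · exact absurd (map_fst_eq_of_top_eq htop) (by simp)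
    · exact absurd (map_fst_eq_of_top_eq htop) (by simp)
    · obtain rfl : i = i' := by simpa using map_fst_eq_of_top_eq htop
      obtain rfl : j = j' := Fin.ext (Nat.succ_injective hdepth)
      rfl
  exists_child := by
    rintro (_ | ⟨i, j⟩) hpos hlt
    · exact absurd hpos (lt_irrefl 0)
    · exact ⟨some (i, ⟨j + 1, hlt⟩), rfl⟩

theorem spiderRooting_isBalanced (hp : 2 ≤ p) (hm : 0 < m) : (spiderRooting p m).IsBalanced m := by
  have : Nontrivial (Fin p) := Fin.nontrivial_iff_two_le.2 hp
  have exists_leg_ne (v : Option (Fin p × Fin m)) : ∃ i : Fin p, some i ≠ v.map Prod.fst := by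
    obtain _ | ⟨i, j⟩ := v
    · exact ⟨⟨0, by lia⟩, by simp⟩
    · obtain ⟨i', hi'⟩ := exists_ne i
      exact ⟨i', by simpa using hi'⟩
  have base_eq_none (v : Option (Fin p × Fin m)) : (spiderRooting p m).base v = none :=
    spiderRooting_depth_eq_zero.1 ((spiderRooting p m).depth_base v)
  let tip (i : Fin p) : Option (Fin p × Fin m) := some (i, ⟨m - 1, by lia⟩)
  have depth_tip (i : Fin p) : (spiderRooting p m).depth (tip i) = m := Nat.sub_add_cancel hm
  refine ⟨(spiderRooting_hasLegs p m).depth_le, fun v => ?_, fun v => ?_⟩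
  · exact ⟨tip ⟨0, by lia⟩, depth_tip _, by rw [base_eq_none, base_eq_none]⟩
  · obtain ⟨i, hi⟩ := exists_leg_ne v
    exact ⟨tip i, depth_tip i, fun h => hi (map_fst_eq_of_top_eq h)⟩

/-- The rooting of the double spider at its central edge. -/
def btreeRooting (p q m : ℕ) : CliqueRooting (btree p q m) where
  depth
    | .inl _ => 0
    | .inr (_, j) => j + 1
  parent
    | .inl c => .inl c
    | .inr (.inl _, ⟨0, _⟩) => .inl false
    | .inr (.inr _, ⟨0, _⟩) => .inl true
    | .inr (i, ⟨j + 1, h⟩) => .inr (i, ⟨j, Nat.lt_of_succ_lt h⟩)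
  parent_of_depth_eq_zero := by
    rintro (c | ⟨i, j⟩) h
    · rfl
    · simp at h
  depth_parent := by
    rintro (c | ⟨i | i, ⟨_ | j, h⟩⟩) <;> rfl
  adj_iff := by
    rintro ((_ | _) | ⟨i | i, ⟨_ | j, h⟩⟩) ((_ | _) | ⟨i' | i', ⟨_ | j', h'⟩⟩) <;>
      grind [btree, SimpleGraph.fromRel_adj]


theorem sumMap_id_fst_eq_of_top_eq {u v : Bool ⊕ ((Fin p ⊕ Fin q) × Fin m)}
    (h : (btreeRooting p q m).top u = (btreeRooting p q m).top v) :
    u.map id Prod.fst = v.map id Prod.fst := by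
  have map_fst_top := (btreeRooting p q m).apply_top (g := Sum.map id Prod.fst) <| by
    rintro (c | ⟨i | i, ⟨_ | j, hj⟩⟩) hv
    · rfl
    · exact absurd hv (by decide : ¬2 ≤ 0 + 1)
    · rfl
    · exact absurd hv (by decide : ¬2 ≤ 0 + 1)
    · rfl
  rw [← map_fst_top u, h, map_fst_top]

theorem btreeRooting_hasLegs (p q m : ℕ) : (btreeRooting p q m).HasLegs m where
  depth_le := by
    rintro (_ | ⟨_, j⟩)
    · exact m.zero_le
    · exact j.isLt
  eq_of_top_eq := by
    rintro (c | ⟨i, j⟩) (c' | ⟨i', j'⟩) htop hdepth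
    · obtain rfl : c = c' := by simpa using sumMap_id_fst_eq_of_top_eq htop
      rfl
    · exact absurd (sumMap_id_fst_eq_of_top_eq htop) (by simp)
    · exact absurd (sumMap_id_fst_eq_of_top_eq htop) (by simp)
    · obtain rfl : i = i' := by simpa using sumMap_id_fst_eq_of_top_eq htop
      obtain rfl : j = j' := Fin.ext (Nat.succ_injective hdepth)
      rfl
  exists_child := by
    rintro (c | ⟨i | i, j⟩) hpos hlt
    · exact absurd hpos (lt_irrefl 0)
    · exact ⟨.inr (.inl i, ⟨j + 1, hlt⟩), rfl⟩
    · exact ⟨.inr (.inr i, ⟨j + 1, hlt⟩), rfl⟩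

theorem btreeRooting_base (v : Bool ⊕ ((Fin p ⊕ Fin q) × Fin m)) :
    (btreeRooting p q m).base v = .inl (v.elim id fun x => x.1.isRight) := by
  have side_base := (btreeRooting p q m).apply_base (g := Sum.elim id fun x => x.1.isRight) <| by
    rintro (c | ⟨i | i, ⟨_ | j, hj⟩⟩) <;> rfl
  rw [← side_base v]
  match (btreeRooting p q m).base v, (btreeRooting p q m).depth_base v with
  | .inl _, _ => rfl
  | .inr _, h => exact absurd h (Nat.succ_ne_zero _)

theorem btreeRooting_isBalanced (hp : 1 ≤ p) (hq : 1 ≤ q) (hm : 0 < m) :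
    (btreeRooting p q m).IsBalanced m := by
  have exists_tip (c : Bool) :
      ∃ z, (btreeRooting p q m).depth z = m ∧ (btreeRooting p q m).base z = .inl c := by
    cases c
    · exact ⟨.inr (.inl ⟨0, hp⟩, ⟨m - 1, by lia⟩), Nat.sub_add_cancel hm, btreeRooting_base _⟩
    · exact ⟨.inr (.inr ⟨0, hq⟩, ⟨m - 1, by lia⟩), Nat.sub_add_cancel hm, btreeRooting_base _⟩
  refine ⟨(btreeRooting_hasLegs p q m).depth_le, fun v => ?_, fun v => ?_⟩
  · rw [btreeRooting_base v]
    exact exists_tip _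
  · obtain ⟨z, hz, hbase⟩ := exists_tip (!(v.elim id fun x => x.1.isRight))
    refine ⟨z, hz, mt (btreeRooting p q m).base_eq_of_top_eq ?_⟩
    simp [hbase, btreeRooting_base v]

section Classification

variable {V : Type*} [Finite V] {G : SimpleGraph V} {R : CliqueRooting G} {k : ℕ} {a b c : V}

theorem CliqueRooting.HasLegs.nonempty_iso_spider (hL : R.HasLegs m) (hm : 0 < m)
    (hcore : ∀ v, R.depth v = 0 ↔ v = c) :
    Nonempty (G ≃g spider (Nat.card {t // R.depth t = 1}) m) := by
  have e := (Finite.equivFin {t // R.depth t = 1}).symm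
  refine ((spiderRooting_hasLegs _ m).nonempty_iso hL (f := fun o => o.elim c fun x => e x.1)
    (fun d hd => ⟨?_, ?_, ?_⟩) ?_).map SimpleGraph.Iso.symm
  · rintro (_ | ⟨i, j⟩) (rfl : _ = d)
    · exact (hcore c).2 rfl
    · exact (e i).2.trans (hd.antisymm' (Nat.succ_pos j))
  · rintro (_ | ⟨i, j⟩) (rfl : _ = d) (_ | ⟨i', j'⟩) (hdepth : _ = _) huv
    · rfl
    · exact absurd hdepth (Nat.succ_ne_zero _)
    · exact absurd hdepth.symm (Nat.succ_ne_zero _)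
    · obtain rfl : i = i' := e.injective (Subtype.ext huv)
      obtain rfl : j' = j := Fin.ext (Nat.succ_injective hdepth)
      rfl
  · intro w (hw : R.depth w = d)
    obtain rfl | rfl : d = 0 ∨ d = 1 := by lia
    · exact ⟨none, rfl, ((hcore w).1 hw).symm⟩
    · exact ⟨some (e.symm ⟨w, hw⟩, ⟨0, hm⟩), rfl, by simp⟩
  · rintro (_ | ⟨i, ⟨_ | j, h⟩⟩) ht
    · exact absurd ht (by decide : 0 ≠ 1)
    · exact (hcore _).1 (by rw [depth_parent, Option.elim_some, (e i).2])
    · exact absurd ht (by simp [spiderRooting])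

theorem CliqueRooting.HasLegs.nonempty_iso_btree (hL : R.HasLegs m) (hm : 0 < m) (hab : a ≠ b)
    (hcore : ∀ v, R.depth v = 0 ↔ v = a ∨ v = b) :
    Nonempty (G ≃g btree (Nat.card {t // R.depth t = 1 ∧ R.parent t = a})
      (Nat.card {t // R.depth t = 1 ∧ R.parent t = b}) m) := by
  have ea := (Finite.equivFin {t // R.depth t = 1 ∧ R.parent t = a}).symm
  have eb := (Finite.equivFin {t // R.depth t = 1 ∧ R.parent t = b}).symm
  refine ((btreeRooting_hasLegs _ _ m).nonempty_iso hL
    (f := Sum.elim (fun s => cond s b a) fun x => x.1.elim (ea ·) (eb ·))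
    (fun d hd => ⟨?_, ?_, ?_⟩) ?_).map SimpleGraph.Iso.symm
  · rintro ((_ | _) | ⟨i | i, j⟩) (rfl : _ = d)
    · exact (hcore a).2 (.inl rfl)
    · exact (hcore b).2 (.inr rfl)
    · exact (ea i).2.1.trans (hd.antisymm' (Nat.succ_pos j))
    · exact (eb i).2.1.trans (hd.antisymm' (Nat.succ_pos j))
  · rintro (s | ⟨i, j⟩) (rfl : _ = d) (s' | ⟨i', j'⟩) (hdepth : _ = _) huv
    · cases s <;> cases s' <;> first | rfl | exact absurd huv hab | exact absurd huv hab.symm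
    · exact absurd hdepth (Nat.succ_ne_zero _)
    · exact absurd hdepth.symm (Nat.succ_ne_zero _)
    · obtain rfl : j' = j := Fin.ext (Nat.succ_injective hdepth)
      obtain i | i := i <;> obtain i' | i' := i'
      · rw [ea.injective (Subtype.ext huv)]
      · exact absurd ((ea i).2.2.symm.trans ((congrArg R.parent huv).trans (eb i').2.2)) hab
      · exact absurd ((ea i').2.2.symm.trans ((congrArg R.parent huv.symm).trans (eb i).2.2)) hab
      · rw [eb.injective (Subtype.ext huv)]
  · intro w (hw : R.depth w = d)
    obtain rfl | rfl : d = 0 ∨ d = 1 := by lia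
    · obtain rfl | rfl := (hcore w).1 hw
      · exact ⟨.inl false, rfl, rfl⟩
      · exact ⟨.inl true, rfl, rfl⟩
    · obtain hwa | hwb := (hcore (R.parent w)).1 (by rw [depth_parent, hw])
      · exact ⟨.inr (.inl (ea.symm ⟨w, hw, hwa⟩), ⟨0, hm⟩), rfl, by simp⟩
      · exact ⟨.inr (.inr (eb.symm ⟨w, hw, hwb⟩), ⟨0, hm⟩), rfl, by simp⟩
  · rintro (s | ⟨i | i, ⟨_ | j, h⟩⟩) ht
    · exact absurd ht (by decide : 0 ≠ 1)
    · exact (ea i).2.2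
    · exact absurd ht (by simp [btreeRooting])
    · exact (eb i).2.2
    · exact absurd ht (by simp [btreeRooting])

theorem CliqueRooting.IsBalanced.noTwinLeaf_iff_iso_spider (hR : R.IsBalanced m)
    (hk : k + 1 = 2 * m) (hcore : ∀ v, R.depth v = 0 ↔ v = c) :
    NoTwinLeaf G k ↔ ∃ p, 2 ≤ p ∧ Nonempty (G ≃g spider p m) := by
  have hm : 0 < m := by lia
  constructor
  · intro h
    refine ⟨_, ?_, ((hR.noTwinLeaf_iff_hasLegs hk).1 h).nonempty_iso_spider hm hcore⟩
    obtain ⟨y, hy, -⟩ := hR.exists_top_ne c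
    obtain ⟨z, hz, hzy⟩ := hR.exists_top_ne y
    exact Finite.one_lt_card_iff_nontrivial.2
      ⟨⟨R.top z, by rw [depth_top]; lia⟩, ⟨R.top y, by rw [depth_top]; lia⟩,
        fun h => hzy (congrArg Subtype.val h)⟩
  · rintro ⟨p, hp, ⟨e⟩⟩
    exact .of_iso e ((spiderRooting_isBalanced hp hm).noTwinLeaf_of_hasLegs hk
      (spiderRooting_hasLegs p m))

theorem CliqueRooting.IsBalanced.noTwinLeaf_iff_iso_btree (hR : R.IsBalanced m)
    (hk : k + 1 = 2 * m) (hab : a ≠ b) (hcore : ∀ v, R.depth v = 0 ↔ v = a ∨ v = b) :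
    NoTwinLeaf G k ↔ ∃ p₁ p₂, 1 ≤ p₁ ∧ 1 ≤ p₂ ∧ Nonempty (G ≃g btree p₁ p₂ m) := by
  have hm : 0 < m := by lia
  have card_tops_pos {v : V} (hv : R.depth v = 0) :
      1 ≤ Nat.card {t // R.depth t = 1 ∧ R.parent t = v} := by
    obtain ⟨z, hz, hzv⟩ := hR.exists_base_eq v
    have : Nonempty {t // R.depth t = 1 ∧ R.parent t = v} :=
      ⟨R.top z, by rw [depth_top]; lia, hzv.trans (R.base_eq_self hv)⟩
    exact Finite.card_pos
  constructor
  · intro h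
    exact ⟨_, _, card_tops_pos ((hcore a).2 (.inl rfl)), card_tops_pos ((hcore b).2 (.inr rfl)),
      ((hR.noTwinLeaf_iff_hasLegs hk).1 h).nonempty_iso_btree hm hab hcore⟩
  · rintro ⟨p₁, p₂, hp₁, hp₂, ⟨e⟩⟩
    exact .of_iso e ((btreeRooting_isBalanced hp₁ hp₂ hm).noTwinLeaf_of_hasLegs hk
      (btreeRooting_hasLegs p₁ p₂ m))

end Classification

end Models

section Trees

namespace CliqueRooting

variable {V : Type*} {G T : SimpleGraph V} {m : ℕ} {b c u v w : V}

theorem exists_parent (hG : G.Connected) (c v : V) :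
    ∃ u, G.dist c u = G.dist c v - 1 ∧ (G.dist c v = 0 → u = v) ∧
      (0 < G.dist c v → G.Adj v u) := by
  obtain hv | hv := Nat.eq_zero_or_pos (G.dist c v)
  · exact ⟨v, by lia, fun _ => rfl, by lia⟩
  · obtain ⟨u, hcu, huv⟩ :=
      exists_dist_eq_and_dist_eq hG (u := c) (v := v) (i := G.dist c v - 1) (j := 1) (by lia)
    exact ⟨u, hcu, by lia, fun _ => (SimpleGraph.dist_eq_one_iff_adj.1 huv).symm⟩

theorem eq_of_adj_of_dist_eq_add_one (hT : T.IsTree) (hu : T.Adj v u) (hw : T.Adj v w)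
    (hcu : T.dist c v = T.dist c u + 1) (hcw : T.dist c v = T.dist c w + 1) : u = w := by
  have exists_path {u : V} (hu : T.Adj v u) (hcu : T.dist c v = T.dist c u + 1) :
      ∃ p : T.Walk v c, p.IsPath ∧ p.snd = u := by
    obtain ⟨p, hp⟩ := hT.connected.exists_walk_length_eq_dist u c
    refine ⟨.cons hu p, SimpleGraph.Walk.isPath_of_length_eq_dist _ ?_, p.snd_cons hu⟩
    rw [SimpleGraph.Walk.length_cons, hp, T.dist_comm, ← hcu, T.dist_comm]
  obtain ⟨p, hp, rfl⟩ := exists_path hu hcu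
  obtain ⟨q, hq, rfl⟩ := exists_path hw hcw
  rw [(hT.existsUnique_path v c).unique hp hq]

theorem exists_depth_eq_dist (hT : T.IsTree) (c : V) :
    ∃ R : CliqueRooting T, ∀ v, R.depth v = T.dist c v := by
  choose parent hdist hroot hadj using exists_parent hT.connected c
  have adj_parent {u : V} (hu : u ≠ parent u) : T.Adj u (parent u) :=
    hadj u (Nat.pos_of_ne_zero fun h => hu (hroot u h).symm)
  have parent_eq {u v : V} (huv : T.Adj u v) (h : T.dist c u = T.dist c v + 1) : parent u = v :=
    eq_of_adj_of_dist_eq_add_one hT (hadj u (by lia)) huv (by rw [hdist]; lia) h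
  refine ⟨⟨T.dist c, parent, hroot _, hdist, fun u v => ⟨fun huv => ⟨huv.ne, .inr ?_⟩, ?_⟩⟩,
    fun _ => rfl⟩
  · exact (hT.dist_eq_dist_add_one_of_adj c huv).imp (parent_eq huv) (parent_eq huv.symm)
  · rintro ⟨hne, ⟨hu, hv⟩ | rfl | rfl⟩
    · rw [hT.connected.dist_eq_zero_iff] at hu hv
      exact absurd (hu.symm.trans hv) hne
    · exact adj_parent hne
    · exact (adj_parent hne.symm).symm

open Classical in
/-- The rooting obtained by enlarging the one-vertex core `{c}` to the edge `{c, b}`: the branch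
with top `b` moves one step closer to the core. -/
noncomputable def absorb (R : CliqueRooting G) (hcore : ∀ v, R.depth v = 0 ↔ v = c)
    (hb : R.depth b = 1) : CliqueRooting G where
  depth v := if R.top v = b then R.depth v - 1 else R.depth v
  parent v := if v = b then b else R.parent v
  parent_of_depth_eq_zero {v} hv := by
    grind [R.top_eq_self (v := v), R.parent_of_depth_eq_zero (v := v)]
  depth_parent v := by
    grind [R.depth_parent v, R.top_eq_self (v := v), R.top_parent (v := v),
      R.top_eq_self (v := R.parent v)]
  adj_iff u v := by
    have hdepth (v : V) : (if R.top v = b then R.depth v - 1 else R.depth v) = 0 ↔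
        v = c ∨ v = b := by
      grind [R.top_eq_self (v := v)]
    have hparent : R.parent b = c := (hcore _).1 (by rw [depth_parent, hb])
    rw [R.adj_iff, hdepth, hdepth, hcore, hcore]
    grind

theorem absorb_depth_eq_zero (R : CliqueRooting G) (hcore : ∀ v, R.depth v = 0 ↔ v = c)
    (hb : R.depth b = 1) : (R.absorb hcore hb).depth v = 0 ↔ v = c ∨ v = b := by
  grind [absorb, R.top_eq_self (v := v)]

theorem exists_isBalanced_of_gdiam_eq_two_mul [Fintype V] (hT : T.IsTree) (hm : 0 < m)
    (hdiam : gdiam T = 2 * m) :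
    ∃ (c : V) (R : CliqueRooting T), R.IsBalanced m ∧ ∀ v, R.depth v = 0 ↔ v = c := by
  have := hT.connected.nonempty
  obtain ⟨x, y, hxy⟩ := exists_dist_eq_gdiam T
  obtain ⟨c, hxc, hcy⟩ := exists_dist_eq_and_dist_eq (i := m) (j := m) hT.connected
    (hxy.trans (by lia))
  obtain ⟨R, hR⟩ := exists_depth_eq_dist hT c
  have hcore (v : V) : R.depth v = 0 ↔ v = c := by
    rw [hR, hT.connected.dist_eq_zero_iff, eq_comm]
  have hbase (v : V) : R.base v = c := (hcore _).1 (R.depth_base v)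
  have hx : R.depth x = m := by rw [hR, T.dist_comm, hxc]
  have hy : R.depth y = m := by rw [hR, hcy]
  have htop : R.top x ≠ R.top y := fun h => by
    have := R.dist_le_of_top_eq h
    lia
  exact ⟨c, R, isBalanced_of_forall_dist_le hx hy htop (fun v => .inl (by rw [hbase, hbase]))
    (hxy ▸ dist_le_gdiam T), hcore⟩

theorem exists_isBalanced_of_gdiam_eq_two_mul_add_one [Fintype V] (hT : T.IsTree)
    (hdiam : gdiam T = 2 * m + 1) :
    ∃ (a b : V) (R : CliqueRooting T),
      a ≠ b ∧ R.IsBalanced m ∧ ∀ v, R.depth v = 0 ↔ v = a ∨ v = b := by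
  have := hT.connected.nonempty
  obtain ⟨x, y, hxy⟩ := exists_dist_eq_gdiam T
  obtain ⟨c, hxc, hcy⟩ := exists_dist_eq_and_dist_eq (i := m) (j := m + 1) hT.connected
    (hxy.trans (by lia))
  obtain ⟨R₀, hR₀⟩ := exists_depth_eq_dist hT c
  have hcore₀ (v : V) : R₀.depth v = 0 ↔ v = c := by
    rw [hR₀, hT.connected.dist_eq_zero_iff, eq_comm]
  have hx₀ : R₀.depth x = m := by rw [hR₀, T.dist_comm, hxc]
  have hy₀ : R₀.depth y = m + 1 := by rw [hR₀, hcy]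
  have hb : R₀.depth (R₀.top y) = 1 := by rw [depth_top]; lia
  have htop₀ : R₀.top x ≠ R₀.top y := fun h => by
    have := R₀.dist_le_of_top_eq h
    lia
  let R := R₀.absorb hcore₀ hb
  have hcore (v : V) : R.depth v = 0 ↔ v = c ∨ v = R₀.top y := R₀.absorb_depth_eq_zero hcore₀ hb
  have hx : R.depth x = m := (if_neg htop₀).trans hx₀
  have hy : R.depth y = m := (if_pos rfl).trans (by rw [hy₀, Nat.add_sub_cancel])
  have hbase : R.base x ≠ R.base y := fun h => by
    have := R.dist_le x y
    rw [h, T.dist_self] at this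
    lia
  have hbase_cover (v : V) : R.base v = R.base x ∨ R.base v = R.base y := by
    have := (hcore _).1 (R.depth_base x)
    have := (hcore _).1 (R.depth_base y)
    have := (hcore _).1 (R.depth_base v)
    grind
  have hne : c ≠ R₀.top y := fun h => by
    have := (hcore₀ _).2 h.symm
    lia
  exact ⟨c, R₀.top y, R, hne, isBalanced_of_forall_dist_le hx hy (mt R.base_eq_of_top_eq hbase)
    hbase_cover (hxy ▸ dist_le_gdiam T), hcore⟩

end CliqueRooting

end Trees

theorem stmt_10_general (k : ℕ) (hodd : Odd k) {V : Type*} [Fintype V] (T : SimpleGraph V)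
    (hT : T.IsTree) :
    (gdiam T = k + 1 →
      ((∀ ℓ, IsLeaf T ℓ → ¬ KTwin T k ℓ) ↔
        ∃ p, 2 ≤ p ∧ Nonempty (T ≃g spider p (k / 2 + 1)))) ∧
    (gdiam T = k + 2 →
      ((∀ ℓ, IsLeaf T ℓ → ¬ KTwin T k ℓ) ↔
        ∃ p₁ p₂, 1 ≤ p₁ ∧ 1 ≤ p₂ ∧ Nonempty (T ≃g btree p₁ p₂ (k / 2 + 1)))) := by
  have hk : k + 1 = 2 * (k / 2 + 1) := by
    have := Nat.two_mul_div_two_add_one_of_odd hodd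
    lia
  constructor
  · intro hdiam
    obtain ⟨c, R, hR, hcore⟩ :=
      exists_isBalanced_of_gdiam_eq_two_mul hT (Nat.succ_pos _) (hdiam.trans hk)
    exact hR.noTwinLeaf_iff_iso_spider hk hcore
  · intro hdiam
    obtain ⟨a, b, R, hab, hR, hcore⟩ :=
      exists_isBalanced_of_gdiam_eq_two_mul_add_one hT (hdiam.trans (congrArg (· + 1) hk))
    exact hR.noTwinLeaf_iff_iso_btree hk hab hcore

/-- For odd `k ≥ 3`:
(i) a tree of diameter `k + 1` has no `k`-twin leaf iff it is isomorphic to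
`S_{p,⌊k/2⌋+1}` for some `p ≥ 2`;
(ii) a tree of diameter `k + 2` has no `k`-twin leaf iff it is isomorphic to
`B_{p₁,p₂,⌊k/2⌋+1}` for some `p₁, p₂ ≥ 1`. -/
theorem stmt_10 (k : ℕ) (hk : 3 ≤ k) (hodd : Odd k) {V : Type} [Fintype V]
    (T : SimpleGraph V) (hT : T.IsTree) :
    (gdiam T = k + 1 →
      ((∀ ℓ, IsLeaf T ℓ → ¬ KTwin T k ℓ) ↔
        ∃ p, 2 ≤ p ∧ Nonempty (T ≃g spider p (k / 2 + 1)))) ∧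
    (gdiam T = k + 2 →
      ((∀ ℓ, IsLeaf T ℓ → ¬ KTwin T k ℓ) ↔
        ∃ p₁ p₂, 1 ≤ p₁ ∧ 1 ≤ p₂ ∧ Nonempty (T ≃g btree p₁ p₂ (k / 2 + 1)))) :=
  stmt_10_general k hodd T hT
end
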